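/- arXiv:2101.09386 — 3 statements merged into one kernel-verified Lean document; each statement's English description precedes it below -/
import Mathlib

section
/- For every n ≥ 1 there exists a positive integer ℓ (depending only on n) such that for every field E of characteristic zero and every virtually solvable subgroup Δ of GL_n(E), one has 𝒟^{n+1}(Δ^{(ℓ)}) = {1}, i.e., the (n+1)-st term of the derived series of the subgroup of Δ generated by the ℓ-th powers of elements of Δ is trivial. -/
open Matrix

/-- A group is virtually solvable if it has a solvable subgroup of finite index. -/
def IsVirtuallySolvable (G : Type*) [Group G] : Prop :=
  ∃ H : Subgroup G, H.FiniteIndex ∧ IsSolvable ↥H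

universe u

namespace VS

/-- spectral idempotents of a finite order element -/
lemma exists_idem {R : Type*} [Ring R] [Algebra ℂ R] (g : R) (N : ℕ) (hN : 0 < N)
    (hg : g ^ N = 1) : ∃ ζ : ℂ, ‖ζ‖ = 1 ∧
    (∀ j : ℕ, IsIdempotentElem ((N : ℂ)⁻¹ • ∑ k ∈ Finset.range N, (ζ ^ (j * k)) • g ^ k)) ∧
    g = ∑ j ∈ Finset.range N, (ζ⁻¹ ^ j) • ((N : ℂ)⁻¹ • ∑ k ∈ Finset.range N, (ζ ^ (j * k)) • g ^ k) := by
  have hp := Complex.isPrimitiveRoot_exp N hN.ne'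
  set ζ := Complex.exp (2 * Real.pi * Complex.I / N) with hζ
  have h1 : ζ ^ N = 1 := hp.pow_eq_one
  have hζ0 : ζ ≠ 0 := hp.ne_zero hN.ne'
  have hN0 : (N : ℂ) ≠ 0 := by exact_mod_cast hN.ne'
  set E : ℕ → R := fun j => (N : ℂ)⁻¹ • ∑ k ∈ Finset.range N, (ζ ^ (j * k)) • g ^ k with hE
  have hgE : ∀ j, g * E j = (ζ⁻¹ ^ j) • E j := by
    intro j
    simp only [hE, mul_smul_comm, Finset.mul_sum]
    rw [smul_comm]
    congr 1
    have h2 : ∀ k, g * g ^ k = g ^ (k+1) := fun k => (pow_succ' g k).symm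
    have h3 : ∀ k, ζ ^ (j * k) • g ^ (k+1) = (ζ⁻¹ ^ j) • (ζ ^ (j * (k+1)) • g ^ (k+1)) := by
      intro k
      rw [smul_smul]
      congr 1
      rw [mul_add, pow_add, mul_one, inv_pow]
      field_simp
    simp only [h2, h3, ← Finset.smul_sum]
    congr 1
    have h4 := Finset.sum_range_succ (fun k => ζ ^ (j * k) • g ^ k) N
    have h5 := Finset.sum_range_succ' (fun k => ζ ^ (j * k) • g ^ k) N
    rw [h4] at h5
    have h6 : ζ ^ (j * N) • g ^ N = ζ ^ (j * 0) • g ^ 0 := by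
      rw [hg, mul_comm j N, pow_mul, h1]; simp
    rw [h6] at h5
    exact (add_right_cancel h5).symm
  have hgE' : ∀ j k, g ^ k * E j = (ζ⁻¹ ^ (j * k)) • E j := by
    intro j k
    induction k with
    | zero => simp
    | succ k ih => rw [pow_succ', mul_assoc, ih, mul_smul_comm, hgE, smul_smul]; congr 1; ring
  refine ⟨ζ, ?_, ?_, ?_⟩
  · exact hp.norm'_eq_one hN.ne'
  · intro j
    change E j * E j = E j
    conv_lhs => lhs; rw [hE]
    simp only [smul_mul_assoc, Finset.sum_mul, hgE', smul_smul]
    have : ∀ k, ζ ^ (j * k) * ζ⁻¹ ^ (j * k) = 1 := by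
      intro k; rw [← mul_pow, mul_inv_cancel₀ hζ0, one_pow]
    simp only [this, one_smul, Finset.sum_const, Finset.card_range]
    rw [← Nat.cast_smul_eq_nsmul ℂ, smul_smul, inv_mul_cancel₀ hN0, one_smul]
  · change g = ∑ j ∈ Finset.range N, (ζ⁻¹ ^ j) • E j
    simp only [← hgE, ← Finset.mul_sum]
    have : ∑ j ∈ Finset.range N, E j = 1 := by
      simp only [hE, ← Finset.smul_sum]
      rw [Finset.sum_comm]
      simp only [← Finset.sum_smul]
      rw [Finset.sum_eq_single_of_mem 0 (by simpa using hN)]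
      · simp only [mul_zero, pow_zero, Finset.sum_const, Finset.card_range, nsmul_eq_mul, mul_one]
        rw [smul_smul, inv_mul_cancel₀ hN0, one_smul]
      · intro k hk hk0
        have : ∑ j ∈ Finset.range N, ζ ^ (j * k) = 0 := by
          have hne : ζ ^ k ≠ 1 := hp.pow_ne_one_of_pos_of_lt hk0 (by simpa using hk)
          have := geom_sum_eq hne N
          simp only [mul_comm _ k, pow_mul]
          rw [this, ← pow_mul, mul_comm k N, pow_mul, h1]; simp
        rw [this, zero_smul]
    rw [this, mul_one]

lemma comm_of_conj {R : Type*} [NormedRing R] [NormedAlgebra ℂ R] (g h h' : R) (N : ℕ)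
    (hN : 0 < N) (hg : g ^ N = 1) (hn : ∀ k, ‖g ^ k‖ ≤ 1) (hh : h * h' = 1) (hh' : h' * h = 1)
    (hn' : ‖h'‖ ≤ 1) (hs : ‖h - 1‖ < 1 / 2) (hc : Commute g (h * g * h')) : Commute g h := by
  obtain ⟨ζ, hζ, hid, hsum⟩ := exists_idem g N hN hg
  set E : ℕ → R := fun j => (N : ℂ)⁻¹ • ∑ k ∈ Finset.range N, (ζ ^ (j * k)) • g ^ k with hE
  have key : ∀ j, Commute (E j) h := by
    intro j
    have hEn : ‖E j‖ ≤ 1 := by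
      simp only [hE]
      rw [norm_smul]
      have : ‖∑ k ∈ Finset.range N, (ζ ^ (j * k)) • g ^ k‖ ≤ ∑ k ∈ Finset.range N, 1 := by
        refine norm_sum_le_of_le _ fun k _ => ?_
        rw [norm_smul, norm_pow, hζ, one_pow, one_mul]
        exact hn k
      simp only [Finset.sum_const, Finset.card_range, nsmul_eq_mul, mul_one] at this
      have hNpos : (0:ℝ) < N := by exact_mod_cast hN
      rw [norm_inv, Complex.norm_natCast, inv_mul_le_iff₀ hNpos, mul_one]
      exact this
    have hpow : ∀ k, (h * g * h') ^ k = h * g ^ k * h' := by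
      intro k
      induction k with
      | zero => simp [hh]
      | succ k ih =>
        rw [pow_succ, ih, pow_succ]
        calc h * g ^ k * h' * (h * g * h') = h * g ^ k * (h' * h) * g * h' := by noncomm_ring
          _ = _ := by rw [hh']; noncomm_ring
    have hEx : h * E j * h' = (N : ℂ)⁻¹ • ∑ k ∈ Finset.range N, (ζ ^ (j * k)) • (h * g * h') ^ k := by
      simp only [hE, hpow, mul_smul_comm, smul_mul_assoc, Finset.mul_sum, Finset.sum_mul]
    have hcE : Commute (E j) (h * E j * h') := by
      rw [hEx]
      simp only [hE]
      refine Commute.smul_left (Commute.smul_right ?_ _) _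
      refine Commute.sum_left _ _ _ fun k _ => Commute.sum_right _ _ _ fun l _ => ?_
      exact Commute.smul_left (Commute.smul_right (hc.pow_pow _ _) _) _
    have e1 : E j * E j = E j := hid j
    set F := h * E j * h' with hF
    have e2 : F * F = F := by
      calc F * F = h * E j * (h' * h) * E j * h' := by rw [hF]; noncomm_ring
        _ = h * (E j * E j) * h' := by rw [hh']; noncomm_ring
        _ = F := by rw [e1]
    have e3 : E j * F = F * E j := hcE
    have hD : (E j - F) * (E j - F) * (E j - F) = E j - F := by
      have a1 : (E j - F) * (E j - F) = E j - 2 • (E j * F) + F := by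
        calc _ = E j * E j - E j * F - F * E j + F * F := by noncomm_ring
          _ = _ := by rw [e1, e2, ← e3]; noncomm_ring
      rw [a1]
      calc _ = E j * E j - E j * F - 2 • (E j * (F * E j)) + 2 • (E j * (F * F)) + F * E j - F * F := by
              noncomm_ring
        _ = E j - E j * F - 2 • (E j * F) + 2 • (E j * F) + E j * F - F := by
              rw [e2, ← e3, e1, ← mul_assoc (E j) (E j) F, e1]
        _ = _ := by abel
    have hnD : ‖E j - F‖ < 1 := by
      have : E j - F = (E j * (h - 1) - (h - 1) * E j) * h' := by
        calc E j - F = E j * (h * h') - F := by rw [hh, mul_one]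
          _ = _ := by rw [hF]; noncomm_ring
      rw [this]
      have b1 : ‖E j * (h - 1) - (h - 1) * E j‖ ≤ ‖h - 1‖ + ‖h - 1‖ := by
        refine (norm_sub_le _ _).trans (add_le_add ?_ ?_)
        · refine (norm_mul_le _ _).trans ?_
          nlinarith [norm_nonneg (h - 1)]
        · refine (norm_mul_le _ _).trans ?_
          nlinarith [norm_nonneg (h - 1)]
      refine (norm_mul_le _ _).trans_lt ?_
      nlinarith [norm_nonneg (h - 1), norm_nonneg h', norm_nonneg (E j * (h - 1) - (h - 1) * E j)]
    have hD0 : ‖E j - F‖ = 0 := by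
      have c1 : ‖E j - F‖ ≤ ‖E j - F‖ * ‖E j - F‖ * ‖E j - F‖ := by
        conv_lhs => rw [← hD]
        refine (norm_mul_le _ _).trans ?_
        gcongr
        exact norm_mul_le _ _
      by_contra hne
      have hpos : 0 < ‖E j - F‖ := lt_of_le_of_ne (norm_nonneg _) (Ne.symm hne)
      nlinarith [mul_pos hpos hpos]
    have hEF : E j = F := sub_eq_zero.1 (norm_eq_zero.1 hD0)
    change E j * h = h * E j
    calc E j * h = F * h := by rw [← hEF]
      _ = h * E j * (h' * h) := by rw [hF]; noncomm_ring
      _ = _ := by rw [hh', mul_one]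
  rw [hsum]
  exact Commute.sum_left _ _ _ fun j _ => Commute.smul_left (key j) _

lemma frob {R : Type*} [NormedRing R] [NormedAlgebra ℂ R] {F : Type*} [Group F] [Finite F]
    (ρ : F →* R) (hρ : ∀ g, ‖ρ g‖ ≤ 1) (g h : F) (hg : ‖ρ g - 1‖ < 1 / 4)
    (hh : ‖ρ h - 1‖ < 1 / 4) : Commute (ρ g) (ρ h) := by
  let s : ℕ → F := fun k => Nat.rec h (fun _ x => x * g * x⁻¹ * g⁻¹) k
  have s0 : s 0 = h := rfl
  have ss : ∀ k, s (k+1) = s k * g * (s k)⁻¹ * g⁻¹ := fun k => rfl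
  have hb : ∀ k, ‖ρ (s k) - 1‖ ≤ (1/2)^k * (1/4) := by
    intro k
    induction k with
    | zero => rw [s0]; simpa using hh.le
    | succ k ih =>
      have : ρ (s (k+1)) - 1 = ((ρ (s k) - 1) * (ρ g - 1) - (ρ g - 1) * (ρ (s k) - 1)) * ρ ((s k)⁻¹ * g⁻¹) := by
        have a1 : (ρ (s k) - 1) * (ρ g - 1) - (ρ g - 1) * (ρ (s k) - 1) = ρ (s k * g) - ρ (g * s k) := by
          rw [map_mul, map_mul]; noncomm_ring
        rw [a1, sub_mul, ← map_mul, ← map_mul, ss]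
        have a2 : g * s k * ((s k)⁻¹ * g⁻¹) = 1 := by group
        rw [a2, map_one]
        congr 2
        group
      rw [this]
      have b1 : ‖(ρ (s k) - 1) * (ρ g - 1) - (ρ g - 1) * (ρ (s k) - 1)‖ ≤ ‖ρ (s k) - 1‖ * (1/4) + ‖ρ (s k) - 1‖ * (1/4) := by
        refine (norm_sub_le _ _).trans (add_le_add ?_ ?_)
        · refine (norm_mul_le _ _).trans ?_
          gcongr
        · refine (norm_mul_le _ _).trans ?_
          rw [mul_comm]
          gcongr
      refine (norm_mul_le _ _).trans ?_
      have b2 := hρ ((s k)⁻¹ * g⁻¹)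
      have : ‖(ρ (s k) - 1) * (ρ g - 1) - (ρ g - 1) * (ρ (s k) - 1)‖ * ‖ρ ((s k)⁻¹ * g⁻¹)‖ ≤ (‖ρ (s k) - 1‖ * (1/4) + ‖ρ (s k) - 1‖ * (1/4)) * 1 := by
        gcongr
      refine this.trans ?_
      rw [pow_succ]
      linarith
  have hex : ∃ k, ρ (s k) = 1 := by
    by_contra hcon
    push Not at hcon
    have : ∃ x : {x : F // ρ x ≠ 1}, ∀ y : {x : F // ρ x ≠ 1}, ‖ρ x - 1‖ ≤ ‖ρ y - 1‖ := by
      have : Nonempty {x : F // ρ x ≠ 1} := ⟨⟨_, hcon 0⟩⟩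
      exact Finite.exists_min (fun x : {x : F // ρ x ≠ 1} => ‖ρ x - 1‖)
    obtain ⟨x, hx⟩ := this
    have hpos : 0 < ‖ρ x - 1‖ := norm_pos_iff.2 (sub_ne_zero.2 x.2)
    obtain ⟨k, hk⟩ := exists_pow_lt_of_lt_one hpos (show (1/2 : ℝ) < 1 by norm_num)
    have := hx ⟨_, hcon k⟩
    have h2 := hb k
    have h3 : (0:ℝ) < (1/2)^k := by positivity
    simp only at this
    linarith
  have hdesc : ∀ k, Commute (ρ g) (ρ (s k)) → Commute (ρ g) (ρ h) := by
    intro k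
    induction k with
    | zero => rw [s0]; exact id
    | succ k ih =>
      intro hc
      refine ih (comm_of_conj (ρ g) (ρ (s k)) (ρ (s k)⁻¹) (orderOf g) (orderOf_pos g) ?_ ?_ ?_ ?_ (hρ _) ?_ ?_)
      · rw [← map_pow, pow_orderOf_eq_one, map_one]
      · intro k; rw [← map_pow]; exact hρ _
      · rw [← map_mul]; simp
      · rw [← map_mul]; simp
      · have := hb k
        have h3 : ((1:ℝ)/2)^k ≤ 1 := pow_le_one₀ (by norm_num) (by norm_num)
        linarith
      · have : ρ (s k) * ρ g * ρ (s k)⁻¹ = ρ (s (k+1)) * ρ g := by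
          rw [← map_mul, ← map_mul, ← map_mul, ss]; congr 1; group
        rw [this]
        exact hc.mul_right (Commute.refl _)
  obtain ⟨k, hk⟩ := hex
  exact hdesc k (by rw [hk]; exact Commute.one_right _)

lemma jordan_norm (R : Type*) [NormedRing R] [NormedAlgebra ℂ R] [ProperSpace R] :
    ∃ ℓ : ℕ, 0 < ℓ ∧ ∀ (F : Type) [Group F] [Finite F] (ρ : F →* R), (∀ g, ‖ρ g‖ ≤ 1) →
      ∀ u v, Commute (ρ (u ^ ℓ)) (ρ (v ^ ℓ)) := by
  obtain ⟨t, -, htf, ht⟩ := Metric.finite_approx_of_totallyBounded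
    (isCompact_closedBall (0 : R) 1).totallyBounded (1/8) (by norm_num)
  refine ⟨(Nat.factorial htf.toFinset.card), Nat.factorial_pos _, ?_⟩
  intro F _ _ ρ hρ u v
  have key : ∀ u : F, ∃ w : F, ‖ρ w - 1‖ < 1/4 ∧ ∃ m, u ^ (Nat.factorial htf.toFinset.card) = w ^ m := by
    intro u
    have : ∀ k : ℕ, ∃ y ∈ htf.toFinset, ‖ρ (u ^ k) - y‖ < 1/8 := by
      intro k
      have := ht (show ρ (u^k) ∈ Metric.closedBall 0 1 by rw [mem_closedBall_zero_iff]; exact hρ _)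
      simp only [Set.mem_iUnion, Metric.mem_ball, dist_eq_norm] at this
      obtain ⟨y, hy, h⟩ := this
      exact ⟨y, by simpa using hy, h⟩
    choose y hy hyn using this
    obtain ⟨i, hi, j, hj, hij, he⟩ := Finset.exists_ne_map_eq_of_card_lt_of_maps_to
      (s := Finset.range (htf.toFinset.card + 1)) (t := htf.toFinset) (f := y) (by simp)
      (fun k _ => hy k)
    wlog hlt : i < j generalizing i j
    · exact this j hj i hi hij.symm he.symm (by omega)
    refine ⟨u ^ (j - i), ?_, ?_⟩
    · have e1 : ρ (u ^ (j - i)) - 1 = ρ ((u ^ i)⁻¹) * (ρ (u ^ j) - ρ (u ^ i)) := by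
        rw [mul_sub, ← map_mul, ← map_mul, inv_mul_cancel, map_one]
        congr 2
        rw [eq_inv_mul_iff_mul_eq, ← pow_add]; congr 1; omega
      rw [e1]
      have h1 := hyn i
      have h2 := hyn j
      rw [← he] at h2
      have h3 : ‖ρ (u ^ j) - ρ (u ^ i)‖ < 1/4 := by
        have : ρ (u ^ j) - ρ (u ^ i) = (ρ (u ^ j) - y i) - (ρ (u ^ i) - y i) := by abel
        rw [this]
        refine (norm_sub_le _ _).trans_lt ?_
        linarith
      refine (norm_mul_le _ _).trans_lt ?_
      nlinarith [hρ ((u ^ i)⁻¹), norm_nonneg (ρ (u ^ j) - ρ (u ^ i))]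
    · have : (j - i) ∣ (Nat.factorial htf.toFinset.card) := by
        refine Nat.dvd_factorial (by omega) ?_
        simp at hj
        omega
      obtain ⟨m, hm⟩ := this
      exact ⟨m, by rw [hm, pow_mul]⟩
  obtain ⟨w, hw, m, hm⟩ := key u
  obtain ⟨w', hw', m', hm'⟩ := key v
  rw [hm, hm', map_pow, map_pow]
  exact (frob ρ hρ w w' hw hw').pow_pow _ _

open scoped Matrix.Norms.L2Operator MatrixOrder ComplexOrder in
lemma jordan_complex (n : ℕ) :
    ∃ ℓ : ℕ, 0 < ℓ ∧ ∀ (F : Type) [Group F] [Finite F] (ρ : F →* Matrix (Fin n) (Fin n) ℂ),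
      ∀ u v, Commute (ρ (u ^ ℓ)) (ρ (v ^ ℓ)) := by
  have : ProperSpace (Matrix (Fin n) (Fin n) ℂ) := FiniteDimensional.proper ℂ _
  obtain ⟨ℓ, hℓ, H⟩ := jordan_norm (Matrix (Fin n) (Fin n) ℂ)
  refine ⟨ℓ, hℓ, fun F _ _ ρ u v => ?_⟩
  rcases subsingleton_or_nontrivial (Matrix (Fin n) (Fin n) ℂ) with hs | hs
  · exact Subsingleton.elim _ _
  classical
  cases nonempty_fintype F
  set P : Matrix (Fin n) (Fin n) ℂ := ∑ g : F, (ρ g)ᴴ * ρ g with hP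
  have hinv : ∀ h, (ρ h)ᴴ * P * ρ h = P := by
    intro h
    rw [hP, Finset.mul_sum, Finset.sum_mul]
    refine Fintype.sum_equiv (Equiv.mulRight h) _ _ fun g => ?_
    simp only [Equiv.coe_mulRight, map_mul, conjTranspose_mul, Matrix.mul_assoc]
  have hu : ∀ g, IsUnit (ρ g) := fun g => (Group.isUnit g).map ρ
  have hPd : P.PosDef := by
    have h1 : P = 1 + ∑ g ∈ Finset.univ.erase (1 : F), (ρ g)ᴴ * ρ g := by
      rw [hP, ← Finset.add_sum_erase _ _ (Finset.mem_univ (1 : F))]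
      simp
    rw [h1]
    refine Matrix.PosDef.one.add_posSemidef ?_
    exact Matrix.posSemidef_sum _ fun g _ => Matrix.posSemidef_conjTranspose_mul_self _
  obtain ⟨Q, hQ⟩ : ∃ Q : Matrix (Fin n) (Fin n) ℂ, P = Qᴴ * Q := by
    have := CStarAlgebra.nonneg_iff_eq_star_mul_self.1 (Matrix.nonneg_iff_posSemidef.2 hPd.posSemidef)
    exact this
  have hQu : IsUnit Q := by
    have h1 := hPd.isUnit
    rw [hQ, Matrix.isUnit_iff_isUnit_det, Matrix.det_mul, IsUnit.mul_iff] at h1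
    rw [Matrix.isUnit_iff_isUnit_det]; exact h1.2
  obtain ⟨q, rfl⟩ := hQu
  let ρ' : F →* Matrix (Fin n) (Fin n) ℂ :=
    { toFun := fun g => (q : Matrix (Fin n) (Fin n) ℂ) * ρ g * ((q⁻¹ : (Matrix (Fin n) (Fin n) ℂ)ˣ) : Matrix (Fin n) (Fin n) ℂ)
      map_one' := by simp
      map_mul' := by
        intro a b
        simp [mul_assoc] }
  have hρ' : ∀ g, ρ' g = (q : Matrix (Fin n) (Fin n) ℂ) * ρ g * ((q⁻¹ : (Matrix (Fin n) (Fin n) ℂ)ˣ) : Matrix (Fin n) (Fin n) ℂ) := fun g => rfl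
  have hun : ∀ g, ‖ρ' g‖ ≤ 1 := by
    intro g
    refine le_of_eq (CStarRing.norm_of_mem_unitary ?_)
    have : star (ρ' g) * ρ' g = 1 := by
      have e := hinv g
      rw [hQ] at e
      simp only [← star_eq_conjTranspose] at e
      rw [hρ']
      simp only [star_mul]
      calc _ = star ((q⁻¹ : (Matrix (Fin n) (Fin n) ℂ)ˣ) : Matrix (Fin n) (Fin n) ℂ) * (star (ρ g) * (star (q : Matrix (Fin n) (Fin n) ℂ) * q) * ρ g) * ((q⁻¹ : (Matrix (Fin n) (Fin n) ℂ)ˣ) : Matrix (Fin n) (Fin n) ℂ) := by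
            simp only [mul_assoc]
        _ = star ((q⁻¹ : (Matrix (Fin n) (Fin n) ℂ)ˣ) : Matrix (Fin n) (Fin n) ℂ) * (star (q : Matrix (Fin n) (Fin n) ℂ)) * (q * ((q⁻¹ : (Matrix (Fin n) (Fin n) ℂ)ˣ) : Matrix (Fin n) (Fin n) ℂ)) := by
            rw [e]; simp only [mul_assoc]
        _ = 1 := by rw [← star_mul]; simp
    exact Unitary.mem_iff.2 ⟨this, mul_eq_one_comm.1 this⟩
  have key := H F ρ' hun u v
  have back : ∀ g, ρ g = ((q⁻¹ : (Matrix (Fin n) (Fin n) ℂ)ˣ) : Matrix (Fin n) (Fin n) ℂ) * ρ' g * q := by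
    intro g; rw [hρ']; simp [← mul_assoc]
  have e : ρ' (u ^ ℓ) * ρ' (v ^ ℓ) = ρ' (v ^ ℓ) * ρ' (u ^ ℓ) := key
  change ρ (u ^ ℓ) * ρ (v ^ ℓ) = ρ (v ^ ℓ) * ρ (u ^ ℓ)
  rw [← map_mul, ← map_mul] at e ⊢
  rw [back, e, ← back]

open Cardinal in
lemma exists_embed0 (L : Type) [Field L] [CharZero L] [Countable L] : Nonempty (L →+* ℂ) := by
  let A := MvPolynomial ℝ L
  let B := FractionRing A
  let M := AlgebraicClosure B
  have : CharZero B := charZero_of_injective_algebraMap (R := L) (FaithfulSMul.algebraMap_injective L B)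
  have : CharZero M := charZero_of_injective_algebraMap (R := B) (FaithfulSMul.algebraMap_injective B M)
  have hA : #A = #ℂ := by
    rw [Cardinal.mk_complex]
    refine le_antisymm ?_ ?_
    · refine (MvPolynomial.cardinalMk_le_max).trans ?_
      have h1 : #L ≤ 𝔠 := (Cardinal.mk_le_aleph0).trans Cardinal.aleph0_le_continuum
      rw [Cardinal.mk_real]
      exact sup_le (sup_le h1 le_rfl) Cardinal.aleph0_le_continuum
    · rw [← Cardinal.mk_real]
      exact Cardinal.mk_le_of_injective (MvPolynomial.X_injective (σ := ℝ) (R := L))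
  have : Infinite A := by
    rw [Cardinal.infinite_iff, hA, Cardinal.mk_complex]; exact Cardinal.aleph0_le_continuum
  have hB : #B = #ℂ := by rw [← hA]; exact IsFractionRing.cardinalMk A B
  have hM : #M = #ℂ := by
    refine le_antisymm ?_ ?_
    · refine (Algebra.IsAlgebraic.cardinalMk_le_max B M).trans ?_
      rw [hB, Cardinal.mk_complex]
      exact max_le le_rfl Cardinal.aleph0_le_continuum
    · rw [← hB]
      exact Cardinal.mk_le_of_injective (FaithfulSMul.algebraMap_injective B M)
  obtain ⟨e⟩ := IsAlgClosed.ringEquiv_of_equiv_of_charZero (K := M) (L := ℂ)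
    (by rw [hM, Cardinal.mk_complex]; exact Cardinal.aleph0_lt_continuum) (Cardinal.eq.1 hM)
  exact ⟨(e : M →+* ℂ).comp ((algebraMap B M).comp (algebraMap L B))⟩

lemma exists_embed (L : Type*) [Field L] [CharZero L] [Countable L] : Nonempty (L →+* ℂ) := by
  let e := Shrink.ringEquiv.{0} L
  have : CharZero (Shrink.{0} L) := charZero_of_injective_ringHom (f := (e.symm : L →+* Shrink.{0} L)) e.symm.injective
  have : Countable (Shrink.{0} L) := e.injective.countable
  obtain ⟨f⟩ := exists_embed0 (Shrink.{0} L)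
  exact ⟨f.comp (e.symm : L →+* Shrink.{0} L)⟩

lemma jordan (n : ℕ) :
    ∃ ℓ : ℕ, 0 < ℓ ∧ ∀ (K : Type*) [Field K] [CharZero K] (F : Type*) [Group F] [Finite F]
      (ρ : F →* Matrix (Fin n) (Fin n) K),
      ∀ u v, Commute (ρ (u ^ ℓ)) (ρ (v ^ ℓ)) := by
  obtain ⟨ℓ, hℓ, H⟩ := jordan_complex n
  refine ⟨ℓ, hℓ, fun K _ _ F _ _ ρ u v => ?_⟩
  let S : Set K := Set.range (fun x : F × Fin n × Fin n => ρ x.1 x.2.1 x.2.2)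
  let L := Subfield.closure S
  have : Countable L := by
    rw [← Cardinal.mk_le_aleph0_iff]
    refine (Subfield.cardinalMk_closure_le_max S).trans (max_le ?_ le_rfl)
    have : Countable S := (Set.countable_range _).to_subtype
    exact Cardinal.mk_le_aleph0
  obtain ⟨f⟩ := exists_embed L
  have hmem : ∀ g i j, ρ g i j ∈ L := fun g i j => Subfield.subset_closure ⟨(g, i, j), rfl⟩
  let r : F →* Matrix (Fin n) (Fin n) L :=
    { toFun := fun g => Matrix.of fun i j => ⟨ρ g i j, hmem g i j⟩
      map_one' := by
        ext i j
        simp [Matrix.one_apply]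
        split_ifs <;> simp
      map_mul' := by
        intro a b
        ext i j
        simp [Matrix.mul_apply] }
  have hr : ∀ g, ρ g = (L.subtype.mapMatrix) (r g) := by
    intro g; ext i j; rfl
  let F0 := Shrink.{0} F
  let e : F0 ≃* F := Shrink.mulEquiv
  have : Finite F0 := Finite.of_equiv F e.symm.toEquiv
  let ρ' : F0 →* Matrix (Fin n) (Fin n) ℂ := ((f.mapMatrix : _ →+* Matrix (Fin n) (Fin n) ℂ) : _ →* _).comp (r.comp (e : F0 →* F))
  have h := H F0 ρ' (e.symm u) (e.symm v)
  have h2 : ∀ x : F, ρ' (e.symm x ^ ℓ) = f.mapMatrix (r (x ^ ℓ)) := by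
    intro x; simp [ρ']
  rw [h2, h2] at h
  have h3 : r (u ^ ℓ) * r (v ^ ℓ) = r (v ^ ℓ) * r (u ^ ℓ) := by
    have hinj : Function.Injective (f.mapMatrix : Matrix (Fin n) (Fin n) L →+* _) :=
      Matrix.map_injective f.injective
    apply hinj
    rw [map_mul, map_mul]
    exact h
  rw [hr, hr]
  change _ * _ = _ * _
  rw [← map_mul, h3, map_mul]

def Pw (G : Type*) [Group G] (ℓ : ℕ) : Subgroup G := Subgroup.closure (Set.range fun x : G => x ^ ℓ)

def DD {G : Type*} [Group G] (H : Subgroup G) : ℕ → Subgroup G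
  | 0 => H
  | m + 1 => ⁅DD H m, DD H m⁆

lemma DD_mono {G : Type*} [Group G] {H H' : Subgroup G} (h : H ≤ H') (m : ℕ) :
    DD H m ≤ DD H' m := by
  induction m with
  | zero => exact h
  | succ m ih => exact Subgroup.commutator_mono ih ih

lemma DD_map {G G' : Type*} [Group G] [Group G'] (f : G →* G') (H : Subgroup G) (m : ℕ) :
    (DD H m).map f = DD (H.map f) m := by
  induction m with
  | zero => rfl
  | succ m ih => simp only [DD]; rw [Subgroup.map_commutator, ih]

lemma DD_eq {G : Type*} [Group G] (H : Subgroup G) (m : ℕ) :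
    (derivedSeries H m).map H.subtype = DD H m := by
  induction m with
  | zero =>
    rw [derivedSeries_zero, ← MonoidHom.range_eq_map, Subgroup.range_subtype]; rfl
  | succ m ih => rw [derivedSeries_succ, Subgroup.map_commutator, ih, DD]

lemma DD_succ_le {G : Type*} [Group G] (H : Subgroup G) (m : ℕ) : DD H (m+1) ≤ DD H m :=
  Subgroup.commutator_le_self _

lemma DD_anti {G : Type*} [Group G] (H : Subgroup G) : Antitone (DD H) :=
  antitone_nat_of_succ_le (DD_succ_le H)

lemma DD_normal {G : Type*} [Group G] (H : Subgroup G) (hH : H.Normal) (m : ℕ) :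
    (DD H m).Normal := by
  induction m with
  | zero => exact hH
  | succ m ih => exact Subgroup.commutator_normal _ _

lemma Pw_mono (G : Type*) [Group G] {ℓ ℓ' : ℕ} (h : ℓ ∣ ℓ') : Pw G ℓ' ≤ Pw G ℓ := by
  obtain ⟨k, rfl⟩ := h
  refine (Subgroup.closure_le _).2 ?_
  rintro _ ⟨x, rfl⟩
  refine Subgroup.subset_closure ⟨x ^ k, ?_⟩
  simp only
  rw [← pow_mul, mul_comm]

lemma Pw_sub (G : Type*) [Group G] (H : Subgroup G) (m ℓ : ℕ) (h : ∀ g : G, g ^ m ∈ H) :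
    Pw G (m * ℓ) ≤ (Pw H ℓ).map H.subtype := by
  refine (Subgroup.closure_le _).2 ?_
  rintro _ ⟨x, rfl⟩
  refine ⟨(⟨x ^ m, h x⟩ : H) ^ ℓ, Subgroup.subset_closure ⟨_, rfl⟩, ?_⟩
  simp [pow_mul]

lemma vs_sub {G : Type*} [Group G] (h : IsVirtuallySolvable G) (H : Subgroup G) :
    IsVirtuallySolvable H := by
  obtain ⟨S, hS, hs⟩ := h
  refine ⟨S.subgroupOf H, inferInstance, ?_⟩
  let f : S.subgroupOf H →* S :=
    { toFun := fun x => ⟨x.1.1, x.2⟩, map_one' := rfl, map_mul' := fun _ _ => rfl }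
  have hs' : Group.IsSolvable S := hs
  exact Group.isSolvable_of_isSolvable_injective (f := f) (fun a b hab => by
    apply Subtype.ext; apply Subtype.ext
    exact congrArg (fun x : S => (x : G)) hab)

lemma vs_normal {G : Type*} [Group G] (h : IsVirtuallySolvable G) :
    ∃ S : Subgroup G, S.Normal ∧ S.FiniteIndex ∧ ∃ k, DD S k = ⊥ := by
  obtain ⟨S, hS, ⟨k, hk⟩⟩ := h
  refine ⟨S.normalCore, inferInstance, inferInstance, k, ?_⟩
  have := DD_mono (Subgroup.normalCore_le S) k
  rw [← DD_eq S, hk, Subgroup.map_bot] at this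
  exact le_bot_iff.1 this

def QQ (n ℓ : ℕ) : Prop :=
  ∀ (K V G : Type u) [Field K] [CharZero K] [IsAlgClosed K] [AddCommGroup V] [Module K V]
    [FiniteDimensional K V] [Group G], Module.finrank K V ≤ n → IsVirtuallySolvable G →
    ∀ ρ : G →* Module.End K V, ∀ x ∈ DD (Pw G ℓ) n, ρ x = 1

lemma ker_comm {G R : Type*} [Group G] [Monoid R] (ρ : G →* R) (H : Subgroup G)
    (h : ∀ x ∈ H, ∀ y ∈ H, Commute (ρ x) (ρ y)) : ∀ x ∈ (⁅H, H⁆ : Subgroup G), ρ x = 1 := by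
  have : (⁅H, H⁆ : Subgroup G) ≤ ρ.ker := by
    rw [Subgroup.commutator_le]
    intro x hx y hy
    rw [MonoidHom.mem_ker, commutatorElement_def]
    have e : ρ (x * y) = ρ (y * x) := by rw [map_mul, map_mul]; exact h x hx y hy
    have : x * y * x⁻¹ * y⁻¹ = x * y * (y * x)⁻¹ := by group
    rw [this, map_mul, e, ← map_mul, mul_inv_cancel, map_one]
  intro x hx
  exact this hx

section
variable {n ℓ : ℕ} {K V G : Type u} [Field K] [CharZero K] [IsAlgClosed K] [AddCommGroup V]
  [Module K V] [FiniteDimensional K V] [Group G]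

lemma red (hQ : QQ.{u} n ℓ) (hd : Module.finrank K V ≤ n + 1) (hG : IsVirtuallySolvable G)
    (ρ : G →* Module.End K V) (W : Submodule K V) (hW0 : W ≠ ⊥) (hW1 : W ≠ ⊤)
    (hW : ∀ g, ∀ w ∈ W, ρ g w ∈ W) : ∀ x ∈ DD (Pw G ℓ) (n+1), ρ x = 1 := by
  let ρ1 : G →* Module.End K W :=
    { toFun := fun g => (ρ g).restrict (hW g)
      map_one' := by ext; simp
      map_mul' := by intro a b; ext; simp }
  let ρ2 : G →* Module.End K (V ⧸ W) :=
    { toFun := fun g => W.mapQ W (ρ g) (hW g)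
      map_one' := by ext; simp
      map_mul' := by intro a b; ext; simp }
  have d1 : Module.finrank K W ≤ n := by
    have := Submodule.finrank_lt hW1
    omega
  have d2 : Module.finrank K (V ⧸ W) ≤ n := by
    have := Submodule.finrank_quotient_add_finrank W
    have : 0 < Module.finrank K W := by
      rw [Module.finrank_pos_iff]; exact (Submodule.nontrivial_iff_ne_bot).2 hW0
    omega
  have a1 : ∀ x ∈ DD (Pw G ℓ) n, ∀ w ∈ W, ρ x w = w := by
    intro x hx w hw
    have := hQ K W G d1 hG ρ1 x hx
    have := LinearMap.congr_fun this ⟨w, hw⟩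
    exact congrArg Subtype.val this
  have a2 : ∀ x ∈ DD (Pw G ℓ) n, ∀ v, ρ x v - v ∈ W := by
    intro x hx v
    have := hQ K (V ⧸ W) G d2 hG ρ2 x hx
    have := LinearMap.congr_fun this (Submodule.Quotient.mk v)
    exact (Submodule.Quotient.eq W).1 this
  refine ker_comm ρ _ fun x hx y hy => ?_
  ext v
  have b1 := a1 x hx _ (a2 y hy v)
  have b2 := a1 y hy _ (a2 x hx v)
  simp only [map_sub] at b1 b2
  simp only [Module.End.mul_apply]
  have c1 : ρ x (ρ y v) = ρ y v - v + ρ x v := by rw [← b1]; abel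
  have c2 : ρ y (ρ x v) = ρ x v - v + ρ y v := by rw [← b2]; abel
  rw [c1, c2]; abel

lemma red2 (hQ : QQ.{u} n ℓ) (hd : Module.finrank K V ≤ n + 1) (hG : IsVirtuallySolvable G)
    (ρ : G →* Module.End K V) (H : Subgroup G) (m : ℕ) (hm : ∀ g, g ^ m ∈ H)
    (W : Submodule K V) (hW0 : W ≠ ⊥) (hW1 : W ≠ ⊤)
    (hW : ∀ g ∈ H, ∀ w ∈ W, ρ g w ∈ W) : ∀ x ∈ DD (Pw G (m * ℓ)) (n+1), ρ x = 1 := by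
  intro x hx
  have h1 := DD_mono (Pw_sub G H m ℓ hm) (n+1) hx
  rw [← DD_map] at h1
  obtain ⟨y, hy, rfl⟩ := h1
  exact red hQ hd (vs_sub hG H) (ρ.comp H.subtype) W hW0 hW1 (fun g w hw => hW g g.2 w hw) y hy

lemma red3 (hQ : QQ.{u} n ℓ) (hd : Module.finrank K V ≤ n + 1) (hG : IsVirtuallySolvable G)
    (ρ : G →* Module.End K V) (b : G) (m : ℕ) (hm : ∀ g, Commute (ρ (g ^ m)) (ρ b))
    (hb : ∀ c : K, ρ b ≠ algebraMap K _ c) : ∀ x ∈ DD (Pw G (m * ℓ)) (n+1), ρ x = 1 := by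
  have hV : Nontrivial V := by
    by_contra hV
    rw [not_nontrivial_iff_subsingleton] at hV
    exact hb 0 (Subsingleton.elim _ _)
  let H : Subgroup G :=
    { carrier := {g | Commute (ρ g) (ρ b)}
      one_mem' := by simp
      mul_mem' := by
        intro x y hx hy
        simp only [Set.mem_ofPred_eq, map_mul] at *
        exact hx.mul_left hy
      inv_mem' := by
        intro x hx
        simp only [Set.mem_ofPred_eq] at *
        have e : ρ x * ρ b = ρ b * ρ x := hx
        have e1 : ρ x⁻¹ * ρ x = 1 := by rw [← map_mul]; simp
        have e2 : ρ x * ρ x⁻¹ = 1 := by rw [← map_mul]; simp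
        calc ρ x⁻¹ * ρ b = ρ x⁻¹ * ρ b * (ρ x * ρ x⁻¹) := by rw [e2, mul_one]
          _ = ρ x⁻¹ * (ρ b * ρ x) * ρ x⁻¹ := by simp only [mul_assoc]
          _ = (ρ x⁻¹ * ρ x) * ρ b * ρ x⁻¹ := by rw [← e]; simp only [mul_assoc]
          _ = ρ b * ρ x⁻¹ := by rw [e1, one_mul] }
  obtain ⟨μ, hμ⟩ := Module.End.exists_eigenvalue (ρ b)
  refine red2 hQ hd hG ρ H m hm (Module.End.eigenspace (ρ b) μ) hμ ?_ ?_
  · intro htop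
    apply hb μ
    ext v
    have : v ∈ Module.End.eigenspace (ρ b) μ := by rw [htop]; trivial
    rw [Module.End.mem_eigenspace_iff] at this
    simpa [Module.algebraMap_end_apply] using this
  · intro g hg w hw
    have e : Commute (ρ g) (ρ b) := hg
    rw [Module.End.mem_eigenspace_iff] at *
    rw [← Module.End.mul_apply, ← e.eq, Module.End.mul_apply, hw, map_smul]

end

lemma weights_finite {K M ι : Type*} [Field K] [AddCommGroup M] [Module K M]
    [FiniteDimensional K M] (f : ι → Module.End K M) (hf : ∀ i j, Commute (f i) (f j)) :
    {χ : ι → K | ∃ v ≠ 0, ∀ i, f i v = χ i • v}.Finite ∧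
    {χ : ι → K | ∃ v ≠ 0, ∀ i, f i v = χ i • v}.ncard ≤ Module.finrank K M := by
  classical
  have hind := Module.End.independent_iInf_maxGenEigenspace_of_forall_mapsTo f
    (fun i j φ => Module.End.mapsTo_maxGenEigenspace_of_comm (hf j i) φ)
  set p := fun χ : ι → K ↦ ⨅ i, (f i).maxGenEigenspace (χ i) with hp
  have : Fintype {χ // p χ ≠ ⊥} := hind.fintypeNeBotOfFiniteDimensional
  have hcard := hind.subtype_ne_bot_le_finrank
  have hsub : {χ : ι → K | ∃ v ≠ 0, ∀ i, f i v = χ i • v} ⊆ {χ | p χ ≠ ⊥} := by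
    rintro χ ⟨v, hv, h⟩
    simp only [Set.mem_ofPred_eq]
    refine (Submodule.ne_bot_iff _).2 ⟨v, ?_, hv⟩
    simp only [hp, Submodule.mem_iInf]
    intro i
    rw [Module.End.mem_maxGenEigenspace]
    exact ⟨1, by simp [h i]⟩
  have hfin : {χ | p χ ≠ ⊥}.Finite := by
    have : Finite {χ // p χ ≠ ⊥} := inferInstance
    exact this
  refine ⟨hfin.subset hsub, (Set.ncard_le_ncard hsub hfin).trans ?_⟩
  rw [← Nat.card_coe_set_eq]
  change Nat.card {χ // p χ ≠ ⊥} ≤ _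
  rw [Nat.card_eq_fintype_card]
  exact hcard

lemma perm_pow {T : Type*} (X : Set T) (hX : X.Finite) (d : ℕ) (hd : X.ncard ≤ d)
    (e : Equiv.Perm T) (he : ∀ x ∈ X, e x ∈ X) (x : T) (hx : x ∈ X) :
    (e ^ d.factorial) x = x := by
  classical
  have : Fintype X := hX.fintype
  let e' : Equiv.Perm X := Equiv.Perm.subtypePermOfFintype e (p := (· ∈ X)) he
  have h1 : e' ^ d.factorial = 1 := by
    have : Fintype.card (Equiv.Perm X) ∣ d.factorial := by
      rw [Fintype.card_perm]
      refine Nat.factorial_dvd_factorial ?_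
      rwa [← Nat.card_eq_fintype_card, Nat.card_coe_set_eq]
    obtain ⟨k, hk⟩ := this
    rw [hk, pow_mul, pow_card_eq_one, one_pow]
  have h2 : ∀ k : ℕ, ∀ y : X, ((e' ^ k) y : T) = (e ^ k) y := by
    intro k
    induction k with
    | zero => intro y; simp
    | succ k ih => intro y; rw [pow_succ, pow_succ, Equiv.Perm.mul_apply, ih]; rfl
  have := h2 d.factorial ⟨x, hx⟩
  rw [h1] at this
  exact this.symm

/-- action of `G` on functions on a normal subgroup -/
def Phi {G : Type*} [Group G] (K : Type*) (A : Subgroup G) [A.Normal] : G →* Equiv.Perm (A → K) where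
  toFun g :=
    { toFun := fun χ a => χ ((MulAut.conjNormal g)⁻¹ a)
      invFun := fun χ a => χ ((MulAut.conjNormal g) a)
      left_inv := by intro χ; ext a; simp
      right_inv := by intro χ; ext a; simp }
  map_one' := by ext χ a; simp
  map_mul' := by intro g h; ext χ a; simp

lemma Phi_apply {G : Type*} [Group G] (K : Type*) (A : Subgroup G) [hA : A.Normal] (g : G)
    (χ : A → K) (a : A) : Phi K A g χ a = χ ⟨g⁻¹ * a * g, by simpa using hA.conj_mem a a.2 g⁻¹⟩ := by
  change χ ((MulAut.conjNormal g)⁻¹ a) = _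
  congr 1
  apply Subtype.ext
  rw [← map_inv]
  simp

lemma common_eigen {K V : Type*} [Field K] [IsAlgClosed K] [AddCommGroup V] [Module K V]
    [FiniteDimensional K V] {ι : Type*} (f : ι → Module.End K V)
    (hf : ∀ i j, Commute (f i) (f j)) : ∀ (n : ℕ) (W : Submodule K V), W ≠ ⊥ →
    Module.finrank K W ≤ n →
    (∀ i, ∀ w ∈ W, f i w ∈ W) → ∃ χ : ι → K, ∃ v ≠ 0, ∀ i, f i v = χ i • v := by
  intro n
  induction n with
  | zero =>
    intro W hW h0
    exact absurd (Submodule.finrank_eq_zero.1 (Nat.le_zero.1 h0)) hW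
  | succ n ih =>
    intro W hW hd hinv
    by_cases hsc : ∀ i, ∃ c : K, ∀ w ∈ W, f i w = c • w
    · choose χ hχ using hsc
      obtain ⟨v, hv, hv0⟩ := (Submodule.ne_bot_iff _).1 hW
      exact ⟨χ, v, hv0, fun i => hχ i v hv⟩
    · push Not at hsc
      obtain ⟨i, hi⟩ := hsc
      have : Nontrivial W := (Submodule.nontrivial_iff_ne_bot).2 hW
      obtain ⟨μ, hμ⟩ := Module.End.exists_eigenvalue ((f i).restrict (hinv i))
      obtain ⟨w, hw⟩ := hμ.exists_hasEigenvector
      have hw1 : f i w = μ • (w : V) := congrArg Subtype.val hw.apply_eq_smul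
      have hw0 : (w : V) ≠ 0 := fun h => hw.2 (Subtype.ext h)
      let W' : Submodule K V := W ⊓ Module.End.eigenspace (f i) μ
      refine ih W' ?_ ?_ ?_
      · exact (Submodule.ne_bot_iff _).2 ⟨w, ⟨w.2, Module.End.mem_eigenspace_iff.2 hw1⟩, hw0⟩
      · have hlt : W' < W := by
          refine lt_of_le_of_ne inf_le_left fun heq => ?_
          obtain ⟨y, hy, hne⟩ := hi μ
          rw [← heq] at hy
          exact hne (Module.End.mem_eigenspace_iff.1 hy.2)
        have := Submodule.finrank_lt_finrank_of_lt hlt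
        omega
      · rintro j y ⟨hy1, hy2⟩
        refine ⟨hinv j y hy1, ?_⟩
        have hy2' := Module.End.mem_eigenspace_iff.1 hy2
        refine Module.End.mem_eigenspace_iff.2 ?_
        rw [← Module.End.mul_apply, (hf i j).eq, Module.End.mul_apply, hy2', map_smul]

section
variable {n ℓ : ℕ} {K V G : Type u} [Field K] [CharZero K] [IsAlgClosed K] [AddCommGroup V]
  [Module K V] [FiniteDimensional K V] [Group G]

lemma caseA (hQ : QQ.{u} n ℓ) (hd : Module.finrank K V ≤ n + 1) (hG : IsVirtuallySolvable G)
    (ρ : G →* Module.End K V) (A : Subgroup G) (hA : A.Normal)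
    (hc : ∀ x ∈ A, ∀ y ∈ A, Commute (ρ x) (ρ y)) (b : G) (hbA : b ∈ A)
    (hb : ∀ c : K, ρ b ≠ algebraMap K _ c) :
    ∀ x ∈ DD (Pw G ((n + 1).factorial * ℓ)) (n+1), ρ x = 1 := by
  have hV : Nontrivial V := by
    by_contra hV
    rw [not_nontrivial_iff_subsingleton] at hV
    exact hb 0 (Subsingleton.elim _ _)
  let f : A → Module.End K V := fun a => ρ a
  have hf : ∀ i j, Commute (f i) (f j) := fun i j => hc i i.2 j j.2
  obtain ⟨hX, hXc⟩ := weights_finite f hf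
  obtain ⟨χ, v, hv, hχ⟩ := common_eigen f hf _ ⊤ top_ne_bot le_rfl (fun _ _ _ => trivial)
  have hmove : ∀ (g : G) (a : A) (w : V), ρ a (ρ g w) = ρ g (ρ (g⁻¹ * a * g) w) := by
    intro g a w
    rw [← Module.End.mul_apply, ← Module.End.mul_apply, ← map_mul, ← map_mul]
    congr 2
    group
  let H : Subgroup G := (MulAction.stabilizer (Equiv.Perm (A → K)) χ).comap (Phi K A)
  have hH : ∀ g, g ∈ H ↔ Phi K A g χ = χ := fun g => Iff.rfl
  let W : Submodule K V := ⨅ a : A, Module.End.eigenspace (ρ a) (χ a)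
  have hWm : ∀ w, w ∈ W ↔ ∀ a : A, ρ a w = χ a • w := by
    intro w
    simp only [W, Submodule.mem_iInf, Module.End.mem_eigenspace_iff]
  refine red2 hQ hd hG ρ H (n+1).factorial ?_ W ?_ ?_ ?_
  · intro g
    rw [hH, map_pow]
    refine perm_pow _ hX (n+1) (hXc.trans hd) _ ?_ χ ⟨v, hv, hχ⟩
    rintro ψ ⟨w, hw, hψ⟩
    refine ⟨ρ g w, ?_, ?_⟩
    · intro h0
      apply hw
      have : ρ g⁻¹ (ρ g w) = w := by
        rw [← Module.End.mul_apply, ← map_mul]; simp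
      rw [← this, h0, map_zero]
    · intro a
      rw [Phi_apply]
      change ρ a (ρ g w) = _
      rw [hmove, ← map_smul]
      congr 1
      exact hψ ⟨g⁻¹ * a * g, _⟩
  · exact (Submodule.ne_bot_iff _).2 ⟨v, (hWm v).2 hχ, hv⟩
  · intro htop
    apply hb (χ ⟨b, hbA⟩)
    ext w
    have : w ∈ W := by rw [htop]; trivial
    simpa [Module.algebraMap_end_apply] using (hWm w).1 this ⟨b, hbA⟩
  · intro g hg w hw
    rw [hWm] at hw ⊢
    intro a
    rw [hmove]
    have h1 := hw ⟨g⁻¹ * a * g, by simpa using hA.conj_mem a a.2 g⁻¹⟩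
    have h2 : χ ⟨g⁻¹ * a * g, by simpa using hA.conj_mem a a.2 g⁻¹⟩ = χ a := by
      have h3 := Phi_apply K A g χ a
      rw [(hH g).1 hg] at h3
      exact h3.symm
    rw [h2] at h1
    change ρ (g⁻¹ * a * g) w = _ at h1
    rw [h1, map_smul]

lemma caseB (hQ : QQ.{u} n ℓ) (hd : Module.finrank K V = n + 1) (hG : IsVirtuallySolvable G)
    (ρ : G →* Module.End K V)
    (hA : ∀ A : Subgroup G, A.Normal → (∀ x ∈ A, ∀ y ∈ A, Commute (ρ x) (ρ y)) →
      ∀ x ∈ A, ∃ c : K, ρ x = algebraMap K _ c)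
    (B : Subgroup G) (hB : B.Normal)
    (hc : ∀ x ∈ B, ∀ y ∈ B, ∃ c : K, ρ (x * y * x⁻¹ * y⁻¹) = algebraMap K _ c)
    (b : G) (hbB : b ∈ B) (hb : ∀ c : K, ρ b ≠ algebraMap K _ c) :
    ∀ x ∈ DD (Pw G ((((n + 1) * (n + 1)).factorial * (n + 1)) * ℓ)) (n+1), ρ x = 1 := by
  have hV : Nontrivial V := by
    by_contra hV
    rw [not_nontrivial_iff_subsingleton] at hV
    exact hb 0 (Subsingleton.elim _ _)
  have hinv : ∀ g, ρ g * ρ g⁻¹ = 1 := fun g => by rw [← map_mul]; simp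
  have hinv' : ∀ g, ρ g⁻¹ * ρ g = 1 := fun g => by rw [← map_mul]; simp
  have hne : ∀ g, ρ g ≠ 0 := fun g h => by
    have := hinv g
    rw [h, zero_mul] at this
    exact zero_ne_one this
  have hc' : ∀ x y : B, ∃ c : K, ρ ((x : G) * (y : G) * (x : G)⁻¹ * (y : G)⁻¹) = algebraMap K _ c :=
    fun x y => hc x x.2 y y.2
  choose c hcc using hc'
  have hxy : ∀ x y : B, ρ x * ρ y = c x y • (ρ y * ρ x) := by
    intro x y
    rw [Algebra.smul_def, ← hcc, ← map_mul, ← map_mul, ← map_mul]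
    congr 1
    group
  let f : B → Module.End K (Module.End K V) := fun x =>
    LinearMap.mulLeft K (ρ x) * LinearMap.mulRight K (ρ (x : G)⁻¹)
  have hfa : ∀ x T, f x T = ρ x * T * ρ (x : G)⁻¹ := by
    intro x T; simp [f, mul_assoc]
  have hf : ∀ x y, Commute (f x) (f y) := by
    intro x y
    refine LinearMap.ext fun T => ?_
    simp only [Module.End.mul_apply, hfa]
    have e1 : ρ x * ρ y = algebraMap K _ (c x y) * (ρ y * ρ x) := by
      rw [hxy, Algebra.smul_def]
    have e2 : ρ (y : G)⁻¹ * ρ (x : G)⁻¹ * algebraMap K _ (c x y) = ρ (x : G)⁻¹ * ρ (y : G)⁻¹ := by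
      rw [← hcc, ← map_mul, ← map_mul, ← map_mul]
      congr 1
      group
    calc ρ x * (ρ y * T * ρ (y : G)⁻¹) * ρ (x : G)⁻¹
        = (ρ x * ρ y) * T * (ρ (y : G)⁻¹ * ρ (x : G)⁻¹) := by simp only [mul_assoc]
      _ = algebraMap K _ (c x y) * ((ρ y * ρ x) * T * (ρ (y : G)⁻¹ * ρ (x : G)⁻¹)) := by
          rw [e1]; simp only [mul_assoc]
      _ = (ρ y * ρ x) * T * (ρ (y : G)⁻¹ * ρ (x : G)⁻¹) * algebraMap K _ (c x y) :=
          Algebra.commutes _ _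
      _ = (ρ y * ρ x) * T * (ρ (x : G)⁻¹ * ρ (y : G)⁻¹) := by rw [mul_assoc _ _ (algebraMap K _ (c x y)), e2]
      _ = _ := by simp only [mul_assoc]
  obtain ⟨hX, hXc⟩ := weights_finite f hf
  set X := {χ : B → K | ∃ v ≠ 0, ∀ i, f i v = χ i • v} with hXdef
  have hfin : Module.finrank K (Module.End K V) = (n+1) * (n+1) := by
    rw [Module.finrank_linearMap K K V V, hd]
  let φ : B → B → K := fun y x => c x y
  have hφ : ∀ y, φ y ∈ X := by
    intro y
    refine ⟨ρ y, hne _, fun x => ?_⟩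
    rw [hfa, hxy, smul_mul_assoc, mul_assoc, hinv, mul_one]
  let cj : G → B → B := fun g y => ⟨g * y * g⁻¹, hB.conj_mem y y.2 g⟩
  have hinj : Function.Injective (algebraMap K (Module.End K V)) := FaithfulSMul.algebraMap_injective _ _
  have hPhi : ∀ g y, Phi K B g (φ y) = φ (cj g y) := by
    intro g y
    ext x
    rw [Phi_apply]
    apply hinj
    simp only [φ]
    rw [← hcc, ← hcc]
    have e : (g⁻¹ * x * g) * (y : G) * (g⁻¹ * x * g)⁻¹ * (y : G)⁻¹
        = g⁻¹ * ((x : G) * (cj g y) * (x : G)⁻¹ * ((cj g y : B) : G)⁻¹) * g := by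
      simp only [cj]; group
    simp only
    rw [e, map_mul, map_mul, hcc, ← Algebra.commutes, mul_assoc, hinv', mul_one]
  set D := ((n + 1) * (n + 1)).factorial with hD
  have hfix : ∀ g y, φ (cj (g ^ D) y) = φ y := by
    intro g y
    rw [← hPhi, map_pow]
    refine perm_pow (Set.range φ) (hX.subset ?_) ((n+1) * (n+1)) ?_ _ ?_ _ ⟨y, rfl⟩
    · rintro _ ⟨z, rfl⟩; exact hφ z
    · rw [← hfin]
      refine (Set.ncard_le_ncard ?_ hX).trans hXc
      rintro _ ⟨z, rfl⟩; exact hφ z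
    · rintro _ ⟨z, rfl⟩
      exact ⟨cj g z, (hPhi g z).symm⟩
  have hc0 : ∀ x y, c x y ≠ 0 := by
    intro x y h
    have := hcc x y
    rw [h, map_zero] at this
    exact hne _ this
  let A : Subgroup G :=
    { carrier := {z | z ∈ B ∧ ∀ x ∈ B, Commute (ρ z) (ρ x)}
      one_mem' := ⟨B.one_mem, fun x _ => by simp⟩
      mul_mem' := by
        rintro x y ⟨hx1, hx2⟩ ⟨hy1, hy2⟩
        refine ⟨B.mul_mem hx1 hy1, fun z hz => ?_⟩
        rw [map_mul]
        exact (hx2 z hz).mul_left (hy2 z hz)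
      inv_mem' := by
        rintro x ⟨hx1, hx2⟩
        refine ⟨B.inv_mem hx1, fun z hz => ?_⟩
        have e : ρ x * ρ z = ρ z * ρ x := hx2 z hz
        calc ρ x⁻¹ * ρ z = ρ x⁻¹ * ρ z * (ρ x * ρ x⁻¹) := by rw [hinv, mul_one]
          _ = ρ x⁻¹ * (ρ z * ρ x) * ρ x⁻¹ := by simp only [mul_assoc]
          _ = (ρ x⁻¹ * ρ x) * ρ z * ρ x⁻¹ := by rw [← e]; simp only [mul_assoc]
          _ = ρ z * ρ x⁻¹ := by rw [hinv', one_mul] }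
  have hAn : A.Normal := by
    constructor
    rintro z ⟨hz1, hz2⟩ g
    refine ⟨hB.conj_mem z hz1 g, fun x hx => ?_⟩
    have h1 : ρ z * ρ (g⁻¹ * x * g) = ρ (g⁻¹ * x * g) * ρ z :=
      hz2 (g⁻¹ * x * g) (by simpa using hB.conj_mem x hx g⁻¹)
    rw [← map_mul, ← map_mul] at h1
    change ρ (g * z * g⁻¹) * ρ x = ρ x * ρ (g * z * g⁻¹)
    rw [← map_mul, ← map_mul]
    have e1 : g * z * g⁻¹ * x = g * (z * (g⁻¹ * x * g)) * g⁻¹ := by group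
    have e2 : x * (g * z * g⁻¹) = g * ((g⁻¹ * x * g) * z) * g⁻¹ := by group
    rw [e1, e2, map_mul, map_mul, h1, ← map_mul, ← map_mul]
  have hAs := hA A hAn (fun x hx y hy => hx.2 y hy.1)
  refine red3 hQ hd.le hG ρ b _ ?_ hb
  intro g
  set h := g ^ D with hh
  have hz : b⁻¹ * (h * b * h⁻¹) ∈ A := by
    refine ⟨B.mul_mem (B.inv_mem hbB) (hB.conj_mem b hbB h), fun x hx => ?_⟩
    have e1 := hxy ⟨x, hx⟩ ⟨b, hbB⟩
    have e2 := hxy ⟨x, hx⟩ (cj h ⟨b, hbB⟩)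
    have e3 : c ⟨x, hx⟩ (cj h ⟨b, hbB⟩) = c ⟨x, hx⟩ ⟨b, hbB⟩ := congrFun (hfix g ⟨b, hbB⟩) ⟨x, hx⟩
    rw [e3] at e2
    set k := c ⟨x, hx⟩ ⟨b, hbB⟩ with hk
    have hk0 : k ≠ 0 := hc0 _ _
    simp only [cj] at e1 e2
    set z := b⁻¹ * (h * b * h⁻¹) with hzdef
    have hbz : h * b * h⁻¹ = b * z := by rw [hzdef]; group
    rw [hbz, map_mul] at e2
    have e4 : k • (ρ b * (ρ x * ρ z)) = k • (ρ b * (ρ z * ρ x)) := by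
      calc k • (ρ b * (ρ x * ρ z)) = (k • (ρ b * ρ x)) * ρ z := by rw [smul_mul_assoc, mul_assoc]
        _ = ρ x * (ρ b * ρ z) := by rw [← e1, mul_assoc]
        _ = _ := by rw [e2, mul_assoc]
    have e5 := smul_right_injective _ hk0 e4
    have e6 : ρ b⁻¹ * (ρ b * (ρ x * ρ z)) = ρ b⁻¹ * (ρ b * (ρ z * ρ x)) := by rw [e5]
    rw [← mul_assoc, ← mul_assoc (ρ b⁻¹), hinv', one_mul, one_mul] at e6
    exact e6.symm
  obtain ⟨μ, hμ⟩ := hAs _ hz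
  have hconj : ρ (h * b * h⁻¹) = μ • ρ b := by
    have : h * b * h⁻¹ = b * (b⁻¹ * (h * b * h⁻¹)) := by group
    rw [this, map_mul, hμ, ← Algebra.commutes, Algebra.smul_def]
  have hμ1 : μ ^ (n+1) = 1 := by
    have h1 := congrArg LinearMap.det hconj
    rw [LinearMap.det_smul, hd, map_mul, map_mul, map_mul, map_mul] at h1
    have h2 : LinearMap.det (ρ h) * LinearMap.det (ρ h⁻¹) = 1 := by
      rw [← map_mul, hinv, map_one]
    have h3 : LinearMap.det (ρ b) ≠ 0 := by
      intro h0
      have : LinearMap.det (ρ b) * LinearMap.det (ρ b⁻¹) = 1 := by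
        rw [← map_mul, hinv, map_one]
      rw [h0, zero_mul] at this
      exact zero_ne_one this
    have h4 : LinearMap.det (ρ b) = μ ^ (n+1) * LinearMap.det (ρ b) := by
      rw [← h1]
      calc LinearMap.det (ρ b) = (LinearMap.det (ρ h) * LinearMap.det (ρ h⁻¹)) * LinearMap.det (ρ b) := by
            rw [h2, one_mul]
        _ = _ := by ring
    exact (mul_right_cancel₀ h3 (by rw [one_mul]; exact h4)).symm
  have hcomm : ρ h * ρ b = μ • (ρ b * ρ h) := by
    rw [← smul_mul_assoc, ← hconj, ← map_mul, ← map_mul]; congr 1; group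
  have hpow : ∀ k : ℕ, ρ h ^ k * ρ b = μ ^ k • (ρ b * ρ h ^ k) := by
    intro k
    induction k with
    | zero => simp
    | succ k ih =>
      rw [pow_succ, mul_assoc, hcomm, mul_smul_comm, ← mul_assoc, ih, smul_mul_assoc, smul_smul,
        mul_assoc, ← pow_succ]
      congr 1; ring
  have := hpow (n+1)
  rw [hμ1, one_smul] at this
  rw [pow_mul, ← hh, map_pow]
  exact this

lemma caseC (ℓJ : ℕ)
    (hJ : ∀ (F : Type u) [Group F] [Finite F]
      (r : F →* Matrix (Fin (n+1)) (Fin (n+1)) K), ∀ u v, Commute (r (u ^ ℓJ)) (r (v ^ ℓJ)))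
    (hd : Module.finrank K V = n + 1)
    (ρ : G →* Module.End K V) (S : Subgroup G) (hS : S.FiniteIndex)
    (hSs : ∀ x ∈ S, ∃ c : K, ρ x = algebraMap K _ c) :
    ∀ x ∈ DD (Pw G ℓJ) (n+1), ρ x = 1 := by
  have hinv : ∀ g, ρ g * ρ g⁻¹ = 1 := fun g => by rw [← map_mul]; simp
  have hinv' : ∀ g, ρ g⁻¹ * ρ g = 1 := fun g => by rw [← map_mul]; simp
  have hdet : ∀ g, LinearMap.det (ρ g) ≠ 0 := by
    intro g h0
    have : LinearMap.det (ρ g) * LinearMap.det (ρ g⁻¹) = 1 := by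
      rw [← map_mul, hinv, map_one]
    rw [h0, zero_mul] at this
    exact zero_ne_one this
  let F : Subgroup (Module.End K V)ˣ :=
    { carrier := {u | LinearMap.det (u : Module.End K V) = 1 ∧
        ∃ (g : G) (a : K), a ≠ 0 ∧ (u : Module.End K V) = a • ρ g}
      one_mem' := ⟨by simp, 1, 1, one_ne_zero, by simp⟩
      mul_mem' := by
        rintro u v ⟨hu, g, a, ha, hg⟩ ⟨hv, g', a', ha', hg'⟩
        refine ⟨by rw [Units.val_mul, map_mul, hu, hv, one_mul], g * g', a * a', mul_ne_zero ha ha', ?_⟩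
        rw [Units.val_mul, hg, hg', map_mul, smul_mul_smul_comm]
      inv_mem' := by
        rintro u ⟨hu, g, a, ha, hg⟩
        refine ⟨?_, g⁻¹, a⁻¹, inv_ne_zero ha, ?_⟩
        · have : LinearMap.det ((u⁻¹ : (Module.End K V)ˣ) : Module.End K V) * LinearMap.det (u : Module.End K V) = 1 := by
            rw [← map_mul]; simp
          rwa [hu, mul_one] at this
        · have : (u : Module.End K V) * (a⁻¹ • ρ g⁻¹) = 1 := by
            rw [hg, smul_mul_smul_comm, hinv, mul_inv_cancel₀ ha, one_smul]
          exact (Units.inv_eq_of_mul_eq_one_right this) }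
  have hFfin : Finite F := by
    classical
    have hfin : (⋃ q : G ⧸ S, (fun μ : K => μ • ρ q.out) ''
        {μ : K | μ ^ (n+1) = (LinearMap.det (ρ q.out))⁻¹}).Finite := by
      have : Finite (G ⧸ S) := inferInstance
      refine Set.finite_iUnion fun q => Set.Finite.image _ ?_
      refine Set.Finite.subset (Polynomial.nthRoots (n+1) (LinearMap.det (ρ q.out))⁻¹).toFinset.finite_toSet ?_
      intro μ hμ
      simpa [Polynomial.mem_nthRoots] using hμ
    have : Finite (⋃ q : G ⧸ S, (fun μ : K => μ • ρ q.out) ''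
        {μ : K | μ ^ (n+1) = (LinearMap.det (ρ q.out))⁻¹} : Set (Module.End K V)) := hfin
    refine Finite.of_injective (β := (⋃ q : G ⧸ S, (fun μ : K => μ • ρ q.out) ''
        {μ : K | μ ^ (n+1) = (LinearMap.det (ρ q.out))⁻¹} : Set (Module.End K V)))
      (fun u => ⟨((u : (Module.End K V)ˣ) : Module.End K V), ?_⟩) ?_
    · obtain ⟨u, hu, g, a, ha, hg⟩ := u
      rw [Set.mem_iUnion]
      obtain ⟨s, hs⟩ := QuotientGroup.mk_out_eq_mul S g
      obtain ⟨k, hk⟩ := hSs _ (S.inv_mem s.2)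
      refine ⟨(g : G ⧸ S), a * k, ?_, ?_⟩
      · have e : (u : Module.End K V) = (a * k) • ρ ((g : G ⧸ S).out) := by
          rw [hg]
          have : g = (g : G ⧸ S).out * (s : G)⁻¹ := by rw [hs]; group
          conv_lhs => rw [this]
          rw [map_mul, hk, ← Algebra.commutes, ← Algebra.smul_def, smul_smul]
        rw [e, LinearMap.det_smul, hd] at hu
        exact eq_inv_of_mul_eq_one_left hu
      · simp only
        rw [hg]
        have : g = (g : G ⧸ S).out * (s : G)⁻¹ := by rw [hs]; group
        conv_rhs => rw [this]
        rw [map_mul, hk, ← Algebra.commutes, ← Algebra.smul_def, smul_smul]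
    · intro u v huv
      apply Subtype.ext
      apply Units.ext
      exact congrArg Subtype.val huv
  let bs := Module.finBasisOfFinrankEq K V hd
  let E := LinearMap.toMatrixAlgEquiv bs
  let r : F →* Matrix (Fin (n+1)) (Fin (n+1)) K :=
    ((E : Module.End K V →* Matrix (Fin (n+1)) (Fin (n+1)) K)).comp
      ((Units.coeHom (Module.End K V)).comp F.subtype)
  have hr : ∀ u : F, r u = E ((u : (Module.End K V)ˣ) : Module.End K V) := fun u => rfl
  have hcomF : ∀ u v : F, Commute (((u : (Module.End K V)ˣ) : Module.End K V) ^ ℓJ)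
      (((v : (Module.End K V)ˣ) : Module.End K V) ^ ℓJ) := by
    intro u v
    have := hJ F r u v
    rw [hr, hr] at this
    apply E.injective
    rw [map_mul, map_mul]
    simpa using this.eq
  have hlift : ∀ g : G, ∃ u : F, ∃ a : K, a ≠ 0 ∧ ((u : (Module.End K V)ˣ) : Module.End K V) = a • ρ g := by
    intro g
    obtain ⟨a, ha⟩ := IsAlgClosed.exists_pow_nat_eq (LinearMap.det (ρ g))⁻¹ (Nat.succ_pos n)
    have ha0 : a ≠ 0 := by
      rintro rfl
      rw [zero_pow (Nat.succ_ne_zero n)] at ha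
      exact inv_ne_zero (hdet g) ha.symm
    let u : (Module.End K V)ˣ := ⟨a • ρ g, a⁻¹ • ρ g⁻¹,
      by rw [smul_mul_smul_comm, hinv, mul_inv_cancel₀ ha0, one_smul],
      by rw [smul_mul_smul_comm, hinv', inv_mul_cancel₀ ha0, one_smul]⟩
    refine ⟨⟨u, ?_, g, a, ha0, rfl⟩, a, ha0, rfl⟩
    change LinearMap.det (a • ρ g) = 1
    rw [LinearMap.det_smul, hd]
    rw [show n + 1 = n.succ from rfl, ha, inv_mul_cancel₀ (hdet g)]
  have hcomG : ∀ g h : G, Commute (ρ (g ^ ℓJ)) (ρ (h ^ ℓJ)) := by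
    intro g h
    obtain ⟨u, a, ha, hu⟩ := hlift g
    obtain ⟨v, a', ha', hv⟩ := hlift h
    have := hcomF u v
    rw [hu, hv, smul_pow, smul_pow] at this
    rw [map_pow, map_pow]
    have h1 := (this.smul_left (a ^ ℓJ)⁻¹).smul_right (a' ^ ℓJ)⁻¹
    rwa [smul_smul, smul_smul, inv_mul_cancel₀ (pow_ne_zero _ ha),
      inv_mul_cancel₀ (pow_ne_zero _ ha'), one_smul, one_smul] at h1
  intro x hx
  have hx1 : x ∈ DD (Pw G ℓJ) 1 := DD_anti _ (by omega) hx
  refine ker_comm ρ (Pw G ℓJ) ?_ x hx1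
  have hIu : ∀ g : G, ∃ u : (Module.End K V)ˣ, (u : Module.End K V) = ρ g ∧
      ((u⁻¹ : (Module.End K V)ˣ) : Module.End K V) = ρ g⁻¹ :=
    fun g => ⟨⟨ρ g, ρ g⁻¹, hinv g, hinv' g⟩, rfl, rfl⟩
  have hl : ∀ T : Module.End K V, ∀ g, Commute (ρ g) T → Commute (ρ g⁻¹) T := by
    intro T g h
    obtain ⟨u, hu1, hu2⟩ := hIu g
    rw [← hu1] at h
    rw [← hu2]
    exact h.units_inv_left
  intro y hy z hz
  have h1 : ∀ g : G, Commute (ρ y) (ρ (g ^ ℓJ)) := by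
    intro g
    induction hy using Subgroup.closure_induction with
    | mem x hx => obtain ⟨w, rfl⟩ := hx; exact hcomG w g
    | one => simp
    | mul a b _ _ ha hb => rw [map_mul]; exact ha.mul_left hb
    | inv a _ ha => exact hl _ _ ha
  induction hz using Subgroup.closure_induction with
  | mem x hx => obtain ⟨w, rfl⟩ := hx; exact h1 w
  | one => simp
  | mul a b _ _ ha hb => rw [map_mul]; exact ha.mul_right hb
  | inv a _ ha => exact (hl _ _ ha.symm).symm

end

lemma step (n ℓ : ℕ) (hℓ : 0 < ℓ) (hQ : QQ.{u} n ℓ) : ∃ ℓ', 0 < ℓ' ∧ QQ.{u} (n+1) ℓ' := by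
  obtain ⟨ℓJ, hℓJ, hJ⟩ := jordan.{u, u} (n+1)
  refine ⟨(n+1).factorial * ((((n + 1) * (n + 1)).factorial * (n + 1))) * ℓJ * ℓ, by positivity, ?_⟩
  intro K V G _ _ _ _ _ _ _ hd hG ρ
  have hdvd : ∀ m, m ∣ (n+1).factorial * ((((n + 1) * (n + 1)).factorial * (n + 1))) * ℓJ * ℓ →
      (∀ x ∈ DD (Pw G m) (n+1), ρ x = 1) → ∀ x ∈ DD (Pw G ((n+1).factorial * ((((n + 1) * (n + 1)).factorial * (n + 1))) * ℓJ * ℓ)) (n+1), ρ x = 1 :=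
    fun m hm h x hx => h x (DD_mono (Pw_mono G hm) _ hx)
  rcases Nat.lt_or_ge (Module.finrank K V) (n+1) with hlt | hge
  · refine hdvd ℓ ⟨_, mul_comm _ _⟩ fun x hx => ?_
    exact hQ K V G (by omega) hG ρ x (DD_succ_le _ _ hx)
  have hd' : Module.finrank K V = n + 1 := le_antisymm hd hge
  by_cases hA : ∀ A : Subgroup G, A.Normal → (∀ x ∈ A, ∀ y ∈ A, Commute (ρ x) (ρ y)) →
      ∀ x ∈ A, ∃ c : K, ρ x = algebraMap K _ c
  swap
  · push Not at hA
    obtain ⟨A, hAn, hAc, b, hbA, hb⟩ := hA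
    refine hdvd _ ?_ (caseA hQ hd hG ρ A hAn hAc b hbA hb)
    exact ⟨(((n + 1) * (n + 1)).factorial * (n + 1)) * ℓJ, by ring⟩
  obtain ⟨S, hSn, hSf, k, hk⟩ := vs_normal hG
  by_cases hS : ∀ x ∈ S, ∃ c : K, ρ x = algebraMap K _ c
  · refine hdvd ℓJ ?_ (caseC ℓJ (fun F _ _ r => hJ K F r) hd' ρ S hSf hS)
    exact ⟨(n+1).factorial * ((((n + 1) * (n + 1)).factorial * (n + 1))) * ℓ, by ring⟩
  · have hex : ∃ k, ∀ x ∈ DD S k, ∃ c : K, ρ x = algebraMap K _ c := by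
      refine ⟨k, fun x hx => ⟨1, ?_⟩⟩
      rw [hk, Subgroup.mem_bot] at hx
      rw [hx]; simp
    classical
    have hmin := fun m => Nat.find_min hex (m := m)
    have hspec := Nat.find_spec hex
    set k0 := Nat.find hex with hk0
    rcases Nat.eq_zero_or_pos k0 with h0 | hpos
    · rw [h0] at hspec
      exact absurd hspec hS
    obtain ⟨j, hj⟩ : ∃ j, k0 = j + 1 := ⟨k0 - 1, by omega⟩
    have hnj := hmin j (by omega)
    push Not at hnj
    obtain ⟨b, hbB, hb⟩ := hnj
    rw [hj] at hspec
    refine hdvd _ ?_ (caseB hQ hd' hG ρ hA (DD S j) (DD_normal S hSn j) ?_ b hbB hb)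
    · exact ⟨(n+1).factorial * ℓJ, by ring⟩
    · intro x hx y hy
      exact hspec _ (Subgroup.commutator_mem_commutator hx hy)

lemma exists_QQ (n : ℕ) : ∃ ℓ, 0 < ℓ ∧ QQ.{u} n ℓ := by
  induction n with
  | zero =>
    refine ⟨1, one_pos, ?_⟩
    intro K V G _ _ _ _ _ _ _ hd hG ρ x _
    have : Subsingleton V := Module.finrank_zero_iff.1 (Nat.le_zero.1 hd)
    exact Subsingleton.elim _ _
  | succ n ih =>
    obtain ⟨ℓ, hℓ, hQ⟩ := ih
    exact step n ℓ hℓ hQ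

end VS

/-- For every `n ≥ 1` there is a positive integer `ℓ` depending only on `n` such that for every
field `E` of characteristic zero and every virtually solvable subgroup `Δ ⊂ GL_n(E)`, the
`(n+1)`-st term of the derived series of the subgroup generated by the `ℓ`-th powers of
elements of `Δ` is trivial. -/
theorem stmt_4 (n : ℕ) (hn : 1 ≤ n) :
    ∃ ℓ : ℕ, 0 < ℓ ∧
      ∀ (E : Type u) [Field E] [CharZero E] (Δ : Subgroup (GL (Fin n) E)),
        IsVirtuallySolvable ↥Δ →
        derivedSeries ↥(Subgroup.closure {y : GL (Fin n) E | ∃ x ∈ Δ, y = x ^ ℓ}) (n + 1)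
          = ⊥ := by
  obtain ⟨ℓ, hℓ, hQ⟩ := VS.exists_QQ.{u} n
  refine ⟨ℓ, hℓ, ?_⟩
  intro E _ _ Δ hΔ
  let K := AlgebraicClosure E
  have : CharZero K := charZero_of_injective_algebraMap (R := E) (FaithfulSMul.algebraMap_injective E K)
  let τ : GL (Fin n) E →* Module.End K (Fin n → K) :=
    ((Matrix.toLinAlgEquiv' : Matrix (Fin n) (Fin n) K ≃ₐ[K] _) : Matrix (Fin n) (Fin n) K →* Module.End K (Fin n → K)).comp
      ((((algebraMap E K).mapMatrix : Matrix (Fin n) (Fin n) E →+* Matrix (Fin n) (Fin n) K) :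
        Matrix (Fin n) (Fin n) E →* Matrix (Fin n) (Fin n) K).comp (Units.coeHom _))
  have hτ : ∀ g, τ g = 1 → g = 1 := by
    intro g hg
    have h1 : Function.Injective τ := by
      intro a b hab
      apply Units.ext
      apply Matrix.map_injective (FaithfulSMul.algebraMap_injective E K)
      exact (Matrix.toLinAlgEquiv' (R := K) (n := Fin n)).injective hab
    exact h1 (by rw [hg, map_one])
  have hmain := hQ K (Fin n → K) Δ (by simp) hΔ (τ.comp Δ.subtype)
  set C := Subgroup.closure {y : GL (Fin n) E | ∃ x ∈ Δ, y = x ^ ℓ} with hC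
  have hCle : C ≤ (VS.Pw Δ ℓ).map Δ.subtype := by
    refine (Subgroup.closure_le _).2 ?_
    rintro _ ⟨x, hx, rfl⟩
    exact ⟨(⟨x, hx⟩ : Δ) ^ ℓ, Subgroup.subset_closure ⟨_, rfl⟩, rfl⟩
  rw [eq_bot_iff]
  intro x hx
  have h1 : (x : GL (Fin n) E) ∈ VS.DD C (n+1) := by
    rw [← VS.DD_eq]; exact ⟨x, hx, rfl⟩
  have h2 := VS.DD_mono hCle _ (VS.DD_succ_le _ _ h1)
  rw [← VS.DD_map] at h2
  obtain ⟨y, hy, hyx⟩ := h2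
  have h3 := hτ _ (hmain y hy)
  rw [Subgroup.mem_bot]
  apply Subtype.ext
  rw [← hyx]
  exact h3
end

section
/- Let K be a field of characteristic zero, n ≥ 1, and let Γ be a subgroup of GL_n(K). If for some positive integer ℓ the subgroup Γ^{(ℓ)} of Γ generated by the ℓ-th powers of elements of Γ is solvable, then Γ is virtually solvable. -/
open Matrix

theorem aux_finiteIndex {G α : Type*} [Group G] (H : Subgroup G) (f : G → α)
    (hf : (Set.range f).Finite) (h : ∀ g g', f g = f g' → g⁻¹ * g' ∈ H) : H.FiniteIndex := by
  have : Finite (Set.range f) := hf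
  have : Finite (G ⧸ H) := by
    refine Finite.of_injective
      (fun q : G ⧸ H => (⟨f q.out, Set.mem_range_self _⟩ : Set.range f)) ?_
    intro q q' hq
    have h1 := h _ _ (Subtype.ext_iff.mp hq)
    rw [← QuotientGroup.out_eq' q, ← QuotientGroup.out_eq' q']
    exact QuotientGroup.eq.mpr h1
  exact Subgroup.finiteIndex_of_finite_quotient

section
variable {K G V : Type*} [Field K] [Group G] [AddCommGroup V] [Module K V]

theorem aux_inv_mul (ρ : Representation K G V) (g : G) (v : V) : ρ g⁻¹ (ρ g v) = v := by
  rw [← Module.End.mul_apply, ← map_mul]; simp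

theorem aux_mul_inv (ρ : Representation K G V) (g : G) (v : V) : ρ g (ρ g⁻¹ v) = v := by
  rw [← Module.End.mul_apply, ← map_mul]; simp

/-- strong irreducibility -/
def StrIrr (ρ : Representation K G V) : Prop :=
  ∀ H : Subgroup G, H.FiniteIndex → ∀ W : Submodule K V,
    (∀ g ∈ H, W ≤ W.comap (ρ g)) → W = ⊥ ∨ W = ⊤

theorem aux_core (ρ : Representation K G V) (hρ : StrIrr ρ) (W : Submodule K V) (hW : W ≠ ⊥)
    (hfin : (Set.range fun g => W.map (ρ g)).Finite) : W = ⊤ := by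
  let H : Subgroup G :=
    { carrier := {g | W.map (ρ g) = W}
      one_mem' := by
        change W.map (ρ 1) = W
        rw [map_one]; exact Submodule.map_id W
      mul_mem' := by
        intro a b ha hb
        change W.map (ρ (a * b)) = W
        change W.map (ρ a) = W at ha
        change W.map (ρ b) = W at hb
        rw [map_mul, Module.End.mul_eq_comp, Submodule.map_comp, hb, ha]
      inv_mem' := by
        intro a ha
        change W.map (ρ a⁻¹) = W
        change W.map (ρ a) = W at ha
        conv_lhs => rw [← ha]
        rw [← Submodule.map_comp, ← Module.End.mul_eq_comp, ← map_mul, inv_mul_cancel, map_one]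
        exact Submodule.map_id W }
  have hH : H.FiniteIndex := by
    refine aux_finiteIndex H _ hfin ?_
    intro g g' h
    change W.map (ρ (g⁻¹ * g')) = W
    rw [map_mul, Module.End.mul_eq_comp, Submodule.map_comp, ← h, ← Submodule.map_comp,
      ← Module.End.mul_eq_comp, ← map_mul, inv_mul_cancel, map_one]
    exact Submodule.map_id W
  refine (hρ H hH W ?_).resolve_left hW
  intro g hg
  exact Submodule.map_le_iff_le_comap.mp (le_of_eq hg)

end

section
variable {K G V : Type*} [Field K] [IsAlgClosed K] [CharZero K] [Group G] [AddCommGroup V]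
  [Module K V] [FiniteDimensional K V]

/-- common eigenvector -/
theorem aux_common [Nontrivial V] {ι : Type*} (f : ι → Module.End K V)
    (hc : ∀ i j, Commute (f i) (f j)) :
    ∃ χ : ι → K, (⨅ i, (f i).eigenspace (χ i)) ≠ ⊥ := by
  obtain ⟨W, ⟨hW0, hWi⟩, hmin⟩ := WellFounded.has_min
    (wellFounded_lt : WellFounded ((· < ·) : Submodule K V → Submodule K V → Prop))
    {W | W ≠ ⊥ ∧ ∀ i, ∀ w ∈ W, f i w ∈ W} ⟨⊤, by simp, by simp⟩
  have key : ∀ i, ∃ c : K, ∀ w ∈ W, f i w = c • w := by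
    intro i
    have : Nontrivial W := Submodule.nontrivial_iff_ne_bot.mpr hW0
    obtain ⟨c, hc'⟩ := Module.End.exists_eigenvalue ((f i).restrict (hWi i))
    obtain ⟨v, hv⟩ := hc'.exists_hasEigenvector
    have hv1 : f i v = c • (v : V) := by
      have := hv.apply_eq_smul
      simpa using congrArg Subtype.val this
    have hle : W ⊓ (f i).eigenspace c = W := by
      by_contra hne
      refine hmin (W ⊓ (f i).eigenspace c) ⟨?_, ?_⟩ (lt_of_le_of_ne inf_le_left hne)
      · intro hb
        have : (v : V) ∈ W ⊓ (f i).eigenspace c :=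
          ⟨v.2, Module.End.mem_eigenspace_iff.mpr hv1⟩
        rw [hb] at this
        exact hv.2 (Subtype.ext (by simpa using this))
      · rintro j w ⟨hw1, hw2⟩
        refine ⟨hWi j w hw1, ?_⟩
        have hw2 : f i w = c • w := Module.End.mem_eigenspace_iff.mp hw2
        refine Module.End.mem_eigenspace_iff.mpr ?_
        rw [← Module.End.mul_apply, (hc i j).eq, Module.End.mul_apply, hw2, map_smul]
    refine ⟨c, fun w hw => ?_⟩
    rw [← hle] at hw
    exact Module.End.mem_eigenspace_iff.mp hw.2
  choose χ hχ using key
  refine ⟨χ, fun hb => hW0 ?_⟩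
  rw [eq_bot_iff, ← hb]
  intro w hw
  rw [Submodule.mem_iInf]
  intro i
  exact Module.End.mem_eigenspace_iff.mpr (hχ i w hw)

theorem aux_abelian (ρ : Representation K G V) (hρ : StrIrr ρ) [Nontrivial V]
    (A : Set G) (hA : ∀ a ∈ A, ∀ g, g * a * g⁻¹ ∈ A)
    (hc : ∀ a ∈ A, ∀ b ∈ A, ρ a * ρ b = ρ b * ρ a) :
    ∀ a ∈ A, ∃ c : K, ρ a = c • 1 := by
  let f : A → Module.End K V := fun a => ρ a
  have hcomm : ∀ i j, Commute (f i) (f j) := fun i j => hc _ i.2 _ j.2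
  obtain ⟨χ, hχ⟩ := aux_common f hcomm
  have hind : iSupIndep fun χ : A → K ↦ ⨅ i, (f i).eigenspace (χ i) := by
    have := Module.End.independent_iInf_maxGenEigenspace_of_forall_mapsTo f
      (fun i j φ => Module.End.mapsTo_maxGenEigenspace_of_comm (hcomm j i) φ)
    refine this.mono ?_
    intro χ
    exact iInf_mono fun i => Module.End.eigenspace_le_maxGenEigenspace
  have hfin := WellFoundedGT.finite_ne_bot_of_iSupIndep hind
  have hmap : ∀ g, ∃ χ' : A → K, (⨅ i, (f i).eigenspace (χ i)).map (ρ g) =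
      ⨅ i, (f i).eigenspace (χ' i) := by
    intro g
    refine ⟨fun a => χ ⟨g⁻¹ * a * g, by simpa using hA a a.2 g⁻¹⟩, ?_⟩
    ext v
    simp only [Submodule.mem_map, Submodule.mem_iInf, Module.End.mem_eigenspace_iff]
    constructor
    · rintro ⟨w, hw, rfl⟩ a
      have := congrArg (ρ g) (hw ⟨g⁻¹ * a * g, by simpa using hA a a.2 g⁻¹⟩)
      simpa [f, aux_mul_inv] using this
    · intro h
      refine ⟨ρ g⁻¹ v, ?_, aux_mul_inv _ _ _⟩
      intro a
      have := congrArg (ρ g⁻¹) (h ⟨g * a * g⁻¹, hA a a.2 g⟩)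
      simpa [f, aux_inv_mul, mul_assoc] using this
  have htop := aux_core ρ hρ _ hχ (by
    refine (hfin.image fun χ => ⨅ i, (f i).eigenspace (χ i)).subset ?_
    rintro _ ⟨g, rfl⟩
    obtain ⟨χ', h⟩ := hmap g
    refine ⟨χ', ?_, h.symm⟩
    change _ ≠ _
    rw [← h]
    intro hb
    apply hχ
    rw [eq_bot_iff]
    intro w hw
    have : ρ g w ∈ (⊥ : Submodule K V) := hb ▸ Submodule.mem_map_of_mem hw
    have h0 : ρ g w = 0 := by simpa using this
    have := aux_inv_mul ρ g w
    rw [h0, map_zero] at this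
    simp [← this])
  intro a ha
  refine ⟨χ ⟨a, ha⟩, ?_⟩
  ext v
  have : v ∈ ⨅ i, (f i).eigenspace (χ i) := by rw [htop]; trivial
  rw [Submodule.mem_iInf] at this
  simpa using Module.End.mem_eigenspace_iff.mp (this ⟨a, ha⟩)

open scoped commutatorElement in
theorem aux_step (ρ : Representation K G V) (hρ : StrIrr ρ) [Nontrivial V]
    (B : Subgroup G) (hB : B.Normal)
    (hc : ∀ a ∈ B, ∀ b ∈ B, ∃ c : K, ρ ⁅a, b⁆ = c • 1) :
    ∀ b ∈ B, ∃ c : K, ρ b = c • 1 := by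
  have hinv : ∀ g, ρ g * ρ g⁻¹ = 1 := fun g => by rw [← map_mul]; simp
  have hinv' : ∀ g, ρ g⁻¹ * ρ g = 1 := fun g => by rw [← map_mul]; simp
  -- center
  have hZ := aux_abelian ρ hρ {z | z ∈ B ∧ ∀ b ∈ B, ρ z * ρ b = ρ b * ρ z}
    (by
      rintro a ⟨ha, hab⟩ g
      refine ⟨hB.conj_mem a ha g, fun b hb => ?_⟩
      have h1 := hab (g⁻¹ * b * g) (by simpa using hB.conj_mem b hb g⁻¹)
      have h2 := congrArg (fun T => ρ g * T * ρ g⁻¹) h1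
      simpa only [← map_mul, mul_assoc, mul_inv_cancel_left, mul_inv_cancel, mul_one] using h2)
    (fun a ha b hb => ha.2 b hb.1)
  have htr : ∀ b ∈ B, LinearMap.trace K V (ρ b) ≠ 0 → ∃ c : K, ρ b = c • 1 := by
    intro b hb ht
    refine hZ b ⟨hb, fun c hcB => ?_⟩
    obtain ⟨ω, hω⟩ := hc b hb c hcB
    have h1 : ρ b * ρ c = ω • (ρ c * ρ b) := by
      have : b * c = ⁅b, c⁆ * (c * b) := by simp [commutatorElement_def, mul_assoc]
      rw [← map_mul, this, map_mul, hω, ← map_mul]; simp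
    have h2 : ρ b = ω • (ρ c * ρ b * ρ c⁻¹) := by
      rw [← smul_mul_assoc, ← h1, mul_assoc, hinv, mul_one]
    have h3 := congrArg (LinearMap.trace K V) h2
    rw [map_smul, LinearMap.trace_mul_cycle, hinv', one_mul, smul_eq_mul] at h3
    have : ω = 1 := by
      have h4 : (ω - 1) * LinearMap.trace K V (ρ b) = 0 := by linear_combination -h3
      rcases mul_eq_zero.mp h4 with h | h
      · linear_combination h
      · exact absurd h ht
    rw [h1, this, one_smul]
  -- finite set of representatives
  obtain ⟨S, hSB, hspan, hli⟩ := exists_linearIndependent K (ρ '' (B : Set G))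
  have hSfin : S.Finite := hli.setFinite
  have hrep : ∀ b ∈ B, ∃ s ∈ S, ∃ c : K, c ≠ 0 ∧ ρ b = c • s := by
    intro b hb
    by_contra! hcon
    have hz : ∀ s ∈ S, LinearMap.trace K V (ρ b⁻¹ * s) = 0 := by
      intro s hs
      by_contra hne
      obtain ⟨b', hb', rfl⟩ := hSB hs
      obtain ⟨c, hc⟩ := htr (b⁻¹ * b') (B.mul_mem (B.inv_mem hb) hb') (by rwa [map_mul])
      have hc0 : c ≠ 0 := by
        rintro rfl
        rw [← map_mul, hc] at hne
        simp at hne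
      refine hcon _ hs c⁻¹ (inv_ne_zero hc0) ?_
      have := congrArg (fun T => ρ b * T) hc
      rw [← map_mul, mul_inv_cancel_left] at this
      rw [this]
      simp [smul_smul, inv_mul_cancel₀ hc0]
    have hz2 : ∀ T ∈ Submodule.span K S, LinearMap.trace K V (ρ b⁻¹ * T) = 0 := by
      intro T hT
      induction hT using Submodule.span_induction with
      | mem x hx => exact hz x hx
      | zero => simp
      | add x y _ _ hx hy => rw [mul_add, map_add, hx, hy, add_zero]
      | smul a x _ hx => rw [mul_smul_comm, map_smul, hx, smul_zero]
    have := hz2 (ρ b) (by rw [hspan]; exact Submodule.subset_span ⟨b, hb, rfl⟩)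
    rw [hinv', LinearMap.trace_one] at this
    have h0 : Module.finrank K V = 0 := by exact_mod_cast this
    exact absurd h0 Module.finrank_pos.ne'
  intro b hb
  obtain ⟨μ, hμ⟩ := Module.End.exists_eigenvalue (ρ b)
  have hE : Module.End.eigenspace (ρ b) μ ≠ ⊥ := hμ
  have hmap : ∀ g, (Module.End.eigenspace (ρ b) μ).map (ρ g) = Module.End.eigenspace (ρ (g * b * g⁻¹)) μ := by
    intro g
    ext v
    simp only [Submodule.mem_map, Module.End.mem_eigenspace_iff]
    constructor
    · rintro ⟨w, hw, rfl⟩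
      simpa [aux_inv_mul] using congrArg (ρ g) hw
    · intro h
      refine ⟨ρ g⁻¹ v, ?_, aux_mul_inv _ _ _⟩
      simpa [aux_inv_mul] using congrArg (ρ g⁻¹) h
  have htop := aux_core ρ hρ _ hE (by
    have hfin : (⋃ s ∈ S, (fun ν => Module.End.eigenspace s ν) ''
        {ν | Module.End.eigenspace s ν ≠ ⊥}).Finite := by
      refine hSfin.biUnion fun s _ => Set.Finite.image _ ?_
      exact WellFoundedGT.finite_ne_bot_of_iSupIndep (Module.End.eigenspaces_iSupIndep s)
    refine hfin.subset ?_
    rintro _ ⟨g, rfl⟩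
    obtain ⟨s, hs, c, hc0, hcs⟩ := hrep _ (hB.conj_mem b hb g)
    have heq : (Module.End.eigenspace (ρ b) μ).map (ρ g) = Module.End.eigenspace s (c⁻¹ * μ) := by
      rw [hmap, hcs]
      ext v
      simp only [Module.End.mem_eigenspace_iff, LinearMap.smul_apply, mul_smul]
      constructor
      · intro h; rw [← h, inv_smul_smul₀ hc0]
      · intro h; rw [h, smul_inv_smul₀ hc0]
    simp only [Set.mem_iUnion]
    refine ⟨s, hs, c⁻¹ * μ, ?_, heq.symm⟩
    change _ ≠ _
    rw [← heq]
    intro hbot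
    apply hE
    rw [eq_bot_iff]
    intro w hw
    have : ρ g w ∈ (⊥ : Submodule K V) := hbot ▸ Submodule.mem_map_of_mem hw
    have h0 : ρ g w = 0 := by simpa using this
    have := aux_inv_mul ρ g w
    rw [h0, map_zero] at this
    simp [← this])
  refine ⟨μ, ?_⟩
  ext v
  have : v ∈ Module.End.eigenspace (ρ b) μ := by rw [htop]; trivial
  simpa using Module.End.mem_eigenspace_iff.mp this

open scoped commutatorElement in
theorem aux_solvable (ρ : Representation K G V) (hρ : StrIrr ρ) [Nontrivial V]
    (N : Subgroup G) [hN : N.Normal] (hs : Group.IsSolvable N) :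
    ∀ b ∈ N, ∃ c : K, ρ b = c • 1 := by
  obtain ⟨m, hm⟩ := hs.solvable
  have key : ∀ j k, k + j = m → ∀ b ∈ (derivedSeries N k).map N.subtype,
      ∃ c : K, ρ b = c • 1 := by
    intro j
    induction j with
    | zero =>
      rintro k hk b hb
      obtain rfl : k = m := by omega
      rw [hm] at hb
      have : b = 1 := by simpa using hb
      exact ⟨1, by simp [this]⟩
    | succ j ih =>
      intro k hk
      refine aux_step ρ hρ _ inferInstance ?_
      intro a ha b hb
      refine ih (k + 1) (by omega) _ ?_
      rw [derivedSeries_succ, Subgroup.map_commutator]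
      exact Subgroup.commutator_mem_commutator ha hb
  intro b hb
  exact key m 0 (by omega) b (by simpa using hb)

end

section
variable {K G V : Type*} [Field K] [IsAlgClosed K] [CharZero K] [Group G] [AddCommGroup V]
  [Module K V] [FiniteDimensional K V]

theorem aux_trace_finite (M : ℕ) (hM : 0 < M) :
    {t : K | ∃ T : Module.End K V, T ^ M = 1 ∧ LinearMap.trace K V T = t}.Finite := by
  classical
  let s : Finset K := (Polynomial.nthRoots M (1 : K)).toFinset
  have hfin : (Set.Icc (0 : Multiset K) (Module.finrank K V • s.val)).Finite := Set.finite_Icc _ _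
  refine (hfin.image Multiset.sum).subset ?_
  rintro _ ⟨T, hT, rfl⟩
  refine ⟨T.charpoly.roots, ⟨Multiset.zero_le _, ?_⟩, ?_⟩
  · rw [Multiset.le_iff_count]
    intro a
    by_cases ha : a ∈ T.charpoly.roots
    · have hs : a ∈ s := by
        have h1 : Module.End.HasEigenvalue T a := by
          rw [Module.End.hasEigenvalue_iff_isRoot_charpoly]
          exact (Polynomial.mem_roots'.mp ha).2
        obtain ⟨v, hv⟩ := h1.exists_hasEigenvector
        have h2 := hv.pow_apply M
        rw [hT, Module.End.one_apply] at h2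
        have h3 : (a ^ M - 1) • v = 0 := by rw [sub_smul, ← h2, one_smul, sub_self]
        rcases smul_eq_zero.mp h3 with h | h
        · simp only [s, Multiset.mem_toFinset]
          rw [Polynomial.mem_nthRoots hM]
          linear_combination h
        · exact absurd h hv.2
      rw [Multiset.count_nsmul, Multiset.count_eq_one_of_mem s.nodup hs, mul_one]
      refine (Multiset.count_le_card _ _).trans ?_
      refine (Polynomial.card_roots' _).trans ?_
      rw [LinearMap.charpoly_natDegree]
    · rw [Multiset.count_eq_zero_of_notMem ha]; exact Nat.zero_le _
  · exact (Module.End.trace_eq_sum_roots_charpoly_of_splits (IsAlgClosed.splits _)).symm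

theorem aux_unip (x : Module.End K V) (M : ℕ) (hM : 0 < M) (hx : x ^ M = 1)
    (ht : ∀ k, LinearMap.trace K V (x ^ k) = Module.finrank K V) : x = 1 := by
  set S : Module.End K V := ∑ i ∈ Finset.range M, x ^ i with hS
  have hM0 : (M : K) ≠ 0 := by exact_mod_cast hM.ne'
  have h1 : x * S = S := by
    have := mul_geom_sum x M
    rw [hx, sub_self, sub_mul, one_mul] at this
    exact sub_eq_zero.mp this
  have h2 : ∀ k, x ^ k * S = S := by
    intro k
    induction k with
    | zero => simp
    | succ k ih => rw [pow_succ, mul_assoc, h1, ih]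
  have h3 : S * S = (M : K) • S := by
    conv_lhs => rw [hS, Finset.sum_mul]
    rw [Finset.sum_congr rfl (fun i _ => h2 i)]
    simp [Nat.cast_smul_eq_nsmul]
  have hP : IsIdempotentElem ((M : K)⁻¹ • S) := by
    change _ * _ = _
    rw [smul_mul_smul_comm, h3, smul_smul]
    congr 1
    field_simp
  have hQ := hP.one_sub
  have htr : LinearMap.trace K V (1 - (M : K)⁻¹ • S) = 0 := by
    rw [map_sub, map_smul, hS, map_sum, LinearMap.trace_one]
    simp only [ht]
    simp [hM0]
  have h0 := LinearMap.IsIdempotentElem.eq_zero_of_trace_eq_zero hQ htr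
  have h4 : S = (M : K) • 1 := by
    rw [sub_eq_zero.mp h0, smul_smul, mul_inv_cancel₀ hM0, one_smul]
  rw [h4] at h1
  have := congrArg (fun T => (M : K)⁻¹ • T) h1
  simpa [smul_smul, inv_mul_cancel₀ hM0] using this

theorem aux_fin (ρ : Representation K G V) [Nontrivial V] (ℓ : ℕ) (hℓ : 0 < ℓ)
    (h : ∀ g, ∃ c : K, ρ (g ^ ℓ) = c • 1) :
    ∃ H : Subgroup G, H.FiniteIndex ∧ ∀ g ∈ H, ∃ c : K, ρ g = c • 1 := by
  have hn : 0 < Module.finrank K V := Module.finrank_pos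
  set n := Module.finrank K V with hn_def
  have hinv : ∀ g, ρ g * ρ g⁻¹ = 1 := fun g => by rw [← map_mul]; simp
  let X : Set (Module.End K V) := {T | LinearMap.det T = 1 ∧ ∃ (c : K) (g : G), T = c • ρ g}
  have hXone : (1 : Module.End K V) ∈ X := ⟨map_one _, 1, 1, by simp⟩
  have hXmul : ∀ S ∈ X, ∀ T ∈ X, S * T ∈ X := by
    rintro S ⟨hS, c, g, hc⟩ T ⟨hT, d, g', hd⟩
    refine ⟨by rw [map_mul, hS, hT, one_mul], c * d, g * g', ?_⟩
    rw [hc, hd, smul_mul_smul_comm, map_mul]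
  have hXpow : ∀ S ∈ X, ∀ k, S ^ k ∈ X := by
    intro S hS k
    induction k with
    | zero => simpa using hXone
    | succ k ih => rw [pow_succ]; exact hXmul _ ih _ hS
  have hM : 0 < ℓ * n := Nat.mul_pos hℓ hn
  have hX : ∀ T ∈ X, T ^ (ℓ * n) = 1 := by
    rintro T ⟨hT, c, g, hc⟩
    obtain ⟨d, hd⟩ := h g
    have h1 : T ^ ℓ = (c ^ ℓ * d) • 1 := by
      rw [hc, smul_pow, ← map_pow, hd, smul_smul]
    have h2 : (c ^ ℓ * d) ^ n = 1 := by
      have := congrArg LinearMap.det h1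
      rw [map_pow, hT, one_pow, LinearMap.det_smul, map_one, mul_one] at this
      exact this.symm
    rw [pow_mul, h1, smul_pow, h2, one_pow, one_smul]
  obtain ⟨S, hSX, hspan, hli⟩ := exists_linearIndependent K X
  have hSfin : S.Finite := hli.setFinite
  have : Finite S := hSfin
  have hXfin : X.Finite := by
    let F : Module.End K V → (S → K) := fun T s => LinearMap.trace K V (T * s)
    have himg : (F '' X).Finite := by
      refine (Set.Finite.pi' (fun _ : S => aux_trace_finite (K := K) (V := V) _ hM)).subset ?_
      rintro _ ⟨T, hT, rfl⟩ s
      exact ⟨T * s, hX _ (hXmul _ hT _ (hSX s.2)), rfl⟩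
    refine Set.Finite.of_finite_image himg ?_
    intro T hT T' hT' hF
    have h1 : ∀ R ∈ Submodule.span K S,
        LinearMap.trace K V (T * R) = LinearMap.trace K V (T' * R) := by
      intro R hR
      induction hR using Submodule.span_induction with
      | mem x hx => exact congrFun hF ⟨x, hx⟩
      | zero => simp
      | add x y _ _ hx hy => rw [mul_add, map_add, hx, hy, mul_add, map_add]
      | smul a x _ hx => rw [mul_smul_comm, map_smul, hx, mul_smul_comm, map_smul]
    have h2 : ∀ R ∈ X, LinearMap.trace K V (T * R) = LinearMap.trace K V (T' * R) :=
      fun R hR => h1 R (by rw [hspan]; exact Submodule.subset_span hR)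
    set I := T' ^ (ℓ * n - 1) with hI
    have hIX : I ∈ X := hXpow _ hT' _
    have hTI : T' * I = 1 := by
      rw [hI, ← pow_succ', Nat.sub_add_cancel hM, hX _ hT']
    have hIT : I * T' = 1 := by
      rw [hI, ← pow_succ, Nat.sub_add_cancel hM, hX _ hT']
    have hxX : I * T ∈ X := hXmul _ hIX _ hT
    have hx : I * T = 1 := by
      refine aux_unip _ _ hM (hX _ hxX) ?_
      intro k
      induction k with
      | zero => rw [pow_zero, LinearMap.trace_one]
      | succ k ih =>
        rw [pow_succ', mul_assoc, LinearMap.trace_mul_comm, mul_assoc,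
          h2 _ (hXmul _ (hXpow _ hxX k) _ hIX), ← mul_assoc, LinearMap.trace_mul_comm,
          ← mul_assoc, hIT, one_mul, ih]
    calc T = T' * I * T := by rw [hTI, one_mul]
      _ = T' := by rw [mul_assoc, hx, mul_one]
  -- normalisation
  have hnorm : ∀ g, ∃ c : K, c ≠ 0 ∧ c • ρ g ∈ X := by
    intro g
    have hdet : LinearMap.det (ρ g) ≠ 0 := by
      intro h0
      have := congrArg LinearMap.det (hinv g)
      rw [map_mul, h0, zero_mul, map_one] at this
      exact zero_ne_one this
    obtain ⟨c, hc⟩ := IsAlgClosed.exists_pow_nat_eq (LinearMap.det (ρ g))⁻¹ hn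
    refine ⟨c, ?_, ?_, c, g, rfl⟩
    · rintro rfl
      rw [zero_pow hn.ne'] at hc
      exact inv_ne_zero hdet hc.symm
    · rw [LinearMap.det_smul, hc, inv_mul_cancel₀ hdet]
  choose c hc0 hcX using hnorm
  let H : Subgroup G :=
    { carrier := {g | ∃ c : K, ρ g = c • 1}
      one_mem' := ⟨1, by simp⟩
      mul_mem' := by
        rintro a b ⟨x, hx⟩ ⟨y, hy⟩
        exact ⟨x * y, by rw [map_mul, hx, hy, smul_mul_smul_comm, one_mul]⟩
      inv_mem' := by
        rintro a ⟨x, hx⟩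
        have h1 := hinv a
        rw [hx, smul_mul_assoc, one_mul] at h1
        refine ⟨x⁻¹, ?_⟩
        have hx0 : x ≠ 0 := by
          rintro rfl
          rw [zero_smul] at h1
          exact zero_ne_one h1
        rw [← h1, smul_smul, inv_mul_cancel₀ hx0, one_smul] }
  refine ⟨H, ?_, fun g hg => hg⟩
  refine aux_finiteIndex H (fun g => c g • ρ g) (hXfin.subset ?_) ?_
  · rintro _ ⟨g, rfl⟩; exact hcX g
  · intro g g' hgg
    refine ⟨(c g')⁻¹ * c g, ?_⟩
    have h1 : ρ g' = ((c g')⁻¹ * c g) • ρ g := by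
      rw [mul_smul, hgg, smul_smul, inv_mul_cancel₀ (hc0 g'), one_smul]
    rw [map_mul, h1, mul_smul_comm, ← map_mul, inv_mul_cancel, map_one]

end

/-- derived series inside an ambient group -/
def aux_D {G : Type*} [Group G] (H : Subgroup G) : ℕ → Subgroup G
  | 0 => H
  | k + 1 => ⁅aux_D H k, aux_D H k⁆

theorem aux_D_mono {G : Type*} [Group G] {H H' : Subgroup G} (h : H ≤ H') (k : ℕ) :
    aux_D H k ≤ aux_D H' k := by
  induction k with
  | zero => exact h
  | succ k ih => exact Subgroup.commutator_mono ih ih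

theorem aux_D_map {G G' : Type*} [Group G] [Group G'] (f : G →* G') (H : Subgroup G) (k : ℕ) :
    aux_D (H.map f) k = (aux_D H k).map f := by
  induction k with
  | zero => rfl
  | succ k ih =>
    change ⁅_, _⁆ = Subgroup.map f ⁅_, _⁆
    rw [Subgroup.map_commutator, ih]

theorem aux_D_anti {G : Type*} [Group G] (H : Subgroup G) : Antitone (aux_D H) := by
  refine antitone_nat_of_succ_le fun k => ?_
  exact Subgroup.commutator_le_self _

theorem aux_D_derived {G : Type*} [Group G] (H : Subgroup G) (k : ℕ) :
    (derivedSeries H k).map H.subtype = aux_D H k := by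
  induction k with
  | zero => rw [derivedSeries_zero, ← MonoidHom.range_eq_map, Subgroup.range_subtype]; rfl
  | succ k ih =>
    rw [derivedSeries_succ, Subgroup.map_commutator, ih]; rfl

universe u v w

theorem aux_main {K : Type u} [Field K] [IsAlgClosed K] [CharZero K] (ℓ : ℕ) (hℓ : 0 < ℓ) (d : ℕ) :
    ∀ (G : Type v) (V : Type w) [Group G] [AddCommGroup V] [Module K V] [FiniteDimensional K V]
      (ρ : Representation K G V) (N : Subgroup G) [N.Normal],
      Module.finrank K V = d → Group.IsSolvable N → (∀ g : G, g ^ ℓ ∈ N) →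
      ∃ H : Subgroup G, H.FiniteIndex ∧ ∃ m, ∀ g ∈ aux_D H m, ρ g = 1 := by
  induction d using Nat.strong_induction_on with
  | _ d ih =>
  intro G V _ _ _ _ ρ N _ hd hN hp
  rcases subsingleton_or_nontrivial V with hV | hV
  · exact ⟨⊤, inferInstance, 0, fun g _ => LinearMap.ext fun v => Subsingleton.elim _ _⟩
  by_cases hρ : StrIrr ρ
  · have hsc := aux_solvable ρ hρ N hN
    obtain ⟨H, hH, hs⟩ := aux_fin ρ ℓ hℓ (fun g => hsc _ (hp g))
    refine ⟨H, hH, 1, ?_⟩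
    have hle : aux_D H 1 ≤ ρ.ker := by
      change ⁅H, H⁆ ≤ _
      rw [Subgroup.commutator_le]
      intro a ha b hb
      obtain ⟨x, hx⟩ := hs a ha
      have hab : ρ (a * b) = ρ (b * a) := by simp [map_mul, hx]
      rw [MonoidHom.mem_ker, commutatorElement_def, mul_assoc, map_mul, hab, ← map_mul]
      simp
    exact fun g hg => hle hg
  · unfold StrIrr at hρ
    push Not at hρ
    obtain ⟨H, hH, W, hW, hW0, hW1⟩ := hρ
    let τ : Representation K H V := ρ.comp H.subtype
    have hτ : ∀ g, W ≤ W.comap (τ g) := fun g => hW g g.2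
    have hNs : Group.IsSolvable (N.subgroupOf H) := by
      have : Group.IsSolvable N := hN
      refine Group.isSolvable_of_isSolvable_injective
        (f := (H.subtype.comp (N.subgroupOf H).subtype).codRestrict N (fun x => x.2)) ?_
      intro x y hxy
      exact Subtype.ext (Subtype.ext (congrArg (fun z : N => (z : G)) hxy))
    have hp' : ∀ g : H, g ^ ℓ ∈ N.subgroupOf H := fun g => by
      rw [Subgroup.mem_subgroupOf]; exact hp g
    have hq := Submodule.finrank_quotient_add_finrank W
    have hw : 0 < Module.finrank K W := by
      have : Nontrivial W := Submodule.nontrivial_iff_ne_bot.mpr hW0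
      exact Module.finrank_pos
    have hw' := Submodule.finrank_lt hW1
    obtain ⟨H1, hH1, m1, h1⟩ := ih _ (by omega) H W (τ.subrepresentation W hτ)
      (N.subgroupOf H) rfl hNs hp'
    obtain ⟨H2, hH2, m2, h2⟩ := ih (Module.finrank K (V ⧸ W)) (by omega) H (V ⧸ W)
      (τ.quotient W hτ) (N.subgroupOf H) rfl hNs hp'
    refine ⟨(H1 ⊓ H2).map H.subtype, ⟨?_⟩, max m1 m2 + 1, ?_⟩
    · rw [Subgroup.index_map_subtype]
      exact mul_ne_zero Subgroup.FiniteIndex.index_ne_zero Subgroup.FiniteIndex.index_ne_zero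
    · have hA : ∀ h ∈ aux_D (H1 ⊓ H2) (max m1 m2), (∀ x ∈ W, τ h x = x) ∧
          ∀ x, ∃ y ∈ W, τ h x = x + y := by
        intro h hh
        have e1 := h1 h (aux_D_mono inf_le_left _ (aux_D_anti _ (le_max_left m1 m2) hh))
        have e2 := h2 h (aux_D_mono inf_le_right _ (aux_D_anti _ (le_max_right m1 m2) hh))
        constructor
        · intro x hx
          have := congrArg Subtype.val (LinearMap.congr_fun e1 ⟨x, hx⟩)
          simpa using this
        · intro x
          have := LinearMap.congr_fun e2 (Submodule.Quotient.mk x)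
          refine ⟨τ h x - x, ?_, by abel⟩
          rw [← Submodule.Quotient.eq]
          simpa using this
      have hle : aux_D (H1 ⊓ H2) (max m1 m2 + 1) ≤ τ.ker := by
        change ⁅_, _⁆ ≤ _
        rw [Subgroup.commutator_le]
        intro a ha b hb
        have hab : τ (a * b) = τ (b * a) := by
          ext x
          obtain ⟨ya, hya, ea⟩ := (hA a ha).2 x
          obtain ⟨yb, hyb, eb⟩ := (hA b hb).2 x
          rw [map_mul, map_mul, Module.End.mul_apply, Module.End.mul_apply, ea, eb, map_add,
            map_add, ea, eb, (hA a ha).1 yb hyb, (hA b hb).1 ya hya]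
          abel
        rw [MonoidHom.mem_ker, commutatorElement_def, mul_assoc, map_mul, hab, ← map_mul]
        simp
      rw [aux_D_map]
      rintro _ ⟨h, hh, rfl⟩
      exact hle hh

theorem stmt_5 {K : Type*} [Field K] [CharZero K] {n : ℕ} (hn : 1 ≤ n)
    (Γ : Subgroup (GL (Fin n) K)) (ℓ : ℕ) (hℓ : 0 < ℓ)
    (hsolv : IsSolvable ↥(Subgroup.closure {y : GL (Fin n) K | ∃ x ∈ Γ, y = x ^ ℓ})) :
    IsVirtuallySolvable ↥Γ := by
  have hsolv' : Group.IsSolvable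
    ↥(Subgroup.closure {y : GL (Fin n) K | ∃ x ∈ Γ, y = x ^ ℓ}) := hsolv
  set C := Subgroup.closure {y : GL (Fin n) K | ∃ x ∈ Γ, y = x ^ ℓ} with hC
  let L := AlgebraicClosure K
  have : CharZero L := charZero_of_injective_algebraMap (algebraMap K L).injective
  let φ : Matrix (Fin n) (Fin n) K →* Module.End L (Fin n → L) :=
    ((Matrix.toLinAlgEquiv' : Matrix (Fin n) (Fin n) L ≃ₐ[L] _) :
      Matrix (Fin n) (Fin n) L →* _).comp
      ((algebraMap K L).mapMatrix :
        Matrix (Fin n) (Fin n) K →+* Matrix (Fin n) (Fin n) L).toMonoidHom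
  have hφ : Function.Injective φ := by
    refine (Matrix.toLinAlgEquiv' (R := L) (n := Fin n)).injective.comp ?_
    exact Matrix.map_injective (algebraMap K L).injective
  let ρ : Representation L Γ (Fin n → L) := φ.comp ((Units.coeHom _).comp Γ.subtype)
  have hρ : Function.Injective ρ :=
    hφ.comp (Units.val_injective.comp Subtype.val_injective)
  have hnorm : (C.subgroupOf Γ).Normal := by
    refine ⟨fun a ha g => ?_⟩
    rw [Subgroup.mem_subgroupOf] at ha ⊢
    have hle : C ≤ C.comap (MulAut.conj (g : GL (Fin n) K)).toMonoidHom := by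
      conv_lhs => rw [hC]
      rw [Subgroup.closure_le]
      rintro _ ⟨x, hx, rfl⟩
      refine Subgroup.subset_closure ⟨g * x * g⁻¹, Γ.mul_mem (Γ.mul_mem g.2 hx) (Γ.inv_mem g.2), ?_⟩
      simp [conj_pow]
    simpa using hle ha
  have hNs : Group.IsSolvable (C.subgroupOf Γ) := by
    refine Group.isSolvable_of_isSolvable_injective
      (f := (Γ.subtype.comp (C.subgroupOf Γ).subtype).codRestrict C (fun x => x.2)) ?_
    intro x y hxy
    exact Subtype.ext (Subtype.ext (congrArg (fun z : C => (z : GL (Fin n) K)) hxy))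
  obtain ⟨H, hH, m, hm⟩ := aux_main ℓ hℓ _ Γ (Fin n → L) ρ (C.subgroupOf Γ) rfl hNs
    (fun g => by
      rw [Subgroup.mem_subgroupOf]
      exact Subgroup.subset_closure ⟨g, g.2, by simp⟩)
  refine ⟨H, hH, ?_⟩
  refine (⟨⟨m, ?_⟩⟩ : Group.IsSolvable H)
  rw [eq_bot_iff]
  intro h hh
  have h1 : (h : Γ) ∈ aux_D H m := by
    rw [← aux_D_derived]; exact ⟨h, hh, rfl⟩
  have h2 : (h : Γ) = 1 := hρ (by rw [hm _ h1, map_one])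
  exact Subgroup.mem_bot.mpr (Subtype.ext h2)
end

section
/- Fix n ≥ 1. Assume that for every number field F and every subgroup Δ of GL_n(F) admitting elements δ₁, …, δ_r ∈ Δ with Δ = ⟨δ₁⟩⋯⟨δ_r⟩ (every element of Δ is a product δ₁^{k₁}⋯δ_r^{k_r} with integers k_i) in which at most one of the δ_i is not semi-simple, the group Δ is virtually solvable. Then for every field K of characteristic zero, every subgroup Γ of GL_n(K) admitting elements γ₁, …, γ_r ∈ Γ with Γ = ⟨γ₁⟩⋯⟨γ_r⟩ in which at most one of the γ_i is not semi-simple is virtually solvable. -/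
open Matrix

/-- An element of `GL n K` is semi-simple if the corresponding linear endomorphism
of `K^n` is a semisimple endomorphism. -/
def IsSemisimpleElt {n : ℕ} {K : Type*} [Field K] (g : GL (Fin n) K) : Prop :=
  Module.End.IsSemisimple ((g : Matrix (Fin n) (Fin n) K).mulVecLin)

universe u

section
open Polynomial Module

def PolyNeat {L V : Type*} [Field L] [AddCommGroup V] [Module L V] (T : End L V) : Prop :=
  ∀ k : ℕ, 0 < k → ∃ q : L[X], T = aeval (T ^ k) q

section
variable {L V : Type*} [Field L] [AddCommGroup V] [Module L V]

theorem unit_sub [FiniteDimensional L V] (B : Subalgebra L (End L V)) (x : B)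
    (hx : IsUnit (x : End L V)) : IsUnit x := by
  have : IsArtinianRing B := IsArtinianRing.of_finite L B
  apply IsArtinianRing.isUnit_of_mem_nonZeroDivisors
  rw [mem_nonZeroDivisors_iff]
  refine ⟨fun y hy => ?_, fun y hy => ?_⟩
  · have := congrArg Subtype.val hy
    simp only [MulMemClass.coe_mul, ZeroMemClass.coe_zero] at this
    exact Subtype.ext (hx.mul_right_eq_zero.1 this)
  · have := congrArg Subtype.val hy
    simp only [MulMemClass.coe_mul, ZeroMemClass.coe_zero] at this
    exact Subtype.ext (hx.mul_left_eq_zero.1 this)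

theorem nil_of_roots [IsAlgClosed L] [FiniteDimensional L V] (T : End L V) (p : L[X])
    (hp : ∀ a, T.HasEigenvalue a → p.eval a = 0) : IsNilpotent (aeval T p) := by
  classical
  obtain ⟨g, k, sep, hd, nil⟩ :=
    exists_squarefree_dvd_pow_of_ne_zero (minpoly.ne_zero_of_finite L T)
  have hg0 : g ≠ 0 := sep.ne_zero
  have hgp : g ∣ p := by
    by_cases hp0 : p = 0
    · simp [hp0]
    have hs : g.Splits := IsAlgClosed.splits g
    rw [hs.dvd_iff_roots_le_roots hg0 hp0]
    rw [Multiset.le_iff_subset]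
    · intro a ha
      rw [mem_roots hp0]
      apply hp
      apply End.hasEigenvalue_of_isRoot
      rw [mem_roots hg0] at ha
      exact ha.dvd hd
    · exact nodup_roots (PerfectField.separable_iff_squarefree.2 sep)
  refine ⟨k, ?_⟩
  rw [← map_pow]
  exact (minpoly.dvd_iff).1 (nil.trans (pow_dvd_pow_of_dvd hgp k))

theorem neat_of_eig [IsAlgClosed L] [CharZero L] [FiniteDimensional L V] (T : End L V)
    (hT : IsUnit T)
    (h : ∀ a b, T.HasEigenvalue a → T.HasEigenvalue b → ∀ k : ℕ, 0 < k → a ^ k = b ^ k → a = b) :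
    PolyNeat T := by
  classical
  intro k hk
  have hfin : Set.Finite {a | T.HasEigenvalue a} := End.finite_hasEigenvalue T
  let S := hfin.toFinset
  let p := Lagrange.interpolate S (fun a => a ^ k) id
  have hp : ∀ a, T.HasEigenvalue a → p.eval (a ^ k) = a := by
    intro a ha
    have : Set.InjOn (fun a : L => a ^ k) S := by
      intro a ha b hb hab
      simp only [S, Set.Finite.coe_toFinset] at ha hb
      exact h a b ha hb k hk hab
    exact Lagrange.eval_interpolate_at_node id this (by simpa [S] using ha)
  have hnil : IsNilpotent (aeval (T ^ k) p - T) := by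
    have := nil_of_roots T (p.comp (X ^ k) - X) (by
      intro a ha; simp [hp a ha])
    simpa [aeval_comp] using this
  let B := Algebra.adjoin L {T ^ k}
  let y : B := ⟨T ^ k, Algebra.self_mem_adjoin_singleton L _⟩
  let x0 : B := aeval y p
  have hval : ∀ q : L[X], ((aeval y q : B) : End L V) = aeval (T ^ k) q := by
    intro q
    have := Polynomial.aeval_algHom_apply B.val y q
    exact this.symm
  have hcT : ∀ q : L[X], Commute (aeval (T ^ k) q) T := by
    intro q
    have : aeval (T ^ k) q = aeval T (q.comp (X ^ k)) := by simp [aeval_comp]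
    rw [this]
    have h2 := (Polynomial.commute_X (q.comp (X ^ k))).map (aeval T)
    rw [aeval_X] at h2
    exact h2.symm
  have nilB : ∀ z : B, IsNilpotent (z : End L V) → IsNilpotent z := by
    rintro z ⟨m, hm⟩
    exact ⟨m, Subtype.ext (by simpa using hm)⟩
  have hnilk : IsNilpotent (x0 ^ k - y) := by
    apply nilB
    have h1 : ((x0 ^ k - y : B) : End L V) = (aeval (T ^ k) p) ^ k - T ^ k := by
      simp [x0, y, hval]
    rw [h1]
    have hc := hcT p
    rw [← hc.mul_geom_sum₂]
    refine Commute.isNilpotent_mul_right ?_ hnil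
    refine Commute.sum_right _ _ _ fun i _ => ?_
    have c1 : Commute (aeval (T ^ k) p - T) (aeval (T ^ k) p) :=
      (Commute.refl _).sub_left hc.symm
    have c2 : Commute (aeval (T ^ k) p - T) T := hc.sub_left (Commute.refl _)
    exact (c1.pow_right _).mul_right (c2.pow_right _)
  have hy : IsUnit y := unit_sub B y (hT.pow k)
  have hx0u : IsUnit x0 := by
    have : IsUnit (x0 ^ k) := by
      have := hnilk.isUnit_add_left_of_commute hy (Commute.all _ _)
      simpa using this
    exact (isUnit_pow_iff hk.ne').1 this
  have hku : IsUnit ((k : B)) := by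
    have : IsUnit (algebraMap L B (k : L)) :=
      (IsUnit.mk0 (k : L) (by exact_mod_cast hk.ne')).map _
    simpa using this
  obtain ⟨r, ⟨hr1, hr2⟩, -⟩ := existsUnique_nilpotent_sub_and_aeval_eq_zero (R := B) (S := B)
    (P := X ^ k - C y) (x := x0) (by simpa using hnilk)
    (by
      rw [derivative_sub, derivative_C, derivative_X_pow, sub_zero]
      simpa using And.intro hku (hx0u.pow (k - 1)))
  have hrk : r ^ k = y := by simpa [sub_eq_zero] using hr2
  have hrmem : (r : End L V) ∈ Algebra.adjoin L {T ^ k} := r.2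
  rw [Algebra.adjoin_singleton_eq_range_aeval] at hrmem
  obtain ⟨q, hq⟩ := hrmem
  refine ⟨q, ?_⟩
  have hq' : aeval (T ^ k) q = (r : End L V) := hq
  rw [hq']
  have hcr : Commute (r : End L V) T := hq' ▸ hcT q
  -- uniqueness
  have hrk' : (r : End L V) ^ k = T ^ k := congrArg Subtype.val hrk
  have hnr : IsNilpotent ((r : End L V) - T) := by
    have e : (r : End L V) - T = (aeval (T ^ k) p - T) - (((x0 - r : B)) : End L V) := by
      simp [x0, hval]
    rw [e]
    have hr1' : IsNilpotent (((x0 - r : B)) : End L V) := by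
      obtain ⟨m, hm⟩ := hr1
      exact ⟨m, by simpa using congrArg Subtype.val hm⟩
    refine Commute.isNilpotent_sub ?_ hnil hr1'
    have e2 : (((x0 - r : B)) : End L V) = aeval (T ^ k) (p - q) := by
      simp [x0, hval, hq']
    rw [e2]
    refine Commute.sub_left ?_ (hcT _).symm
    exact (Commute.all p (p - q)).map (aeval (T ^ k))
  let A := Algebra.adjoin L {T}
  let t : A := ⟨T, Algebra.self_mem_adjoin_singleton L _⟩
  let r' : A := aeval (t ^ k) q
  have hr' : (r' : End L V) = r := by
    have := Polynomial.aeval_algHom_apply A.val (t ^ k) q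
    exact this.symm.trans hq'
  have ht : IsUnit t := unit_sub A t hT
  have hkA : IsUnit ((k : A)) := by
    have : IsUnit (algebraMap L A (k : L)) :=
      (IsUnit.mk0 (k : L) (by exact_mod_cast hk.ne')).map _
    simpa using this
  obtain ⟨w, -, hw⟩ := existsUnique_nilpotent_sub_and_aeval_eq_zero (R := A) (S := A)
    (P := X ^ k - C (t ^ k)) (x := t) (by simp)
    (by
      rw [derivative_sub, derivative_C, derivative_X_pow, sub_zero]
      simpa using And.intro hkA (ht.pow (k - 1)))
  have h1 := hw t ⟨by simp, by simp⟩
  have h2 := hw r' ⟨by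
    obtain ⟨m, hm⟩ := hnr
    rw [← neg_sub, isNilpotent_neg_iff]
    exact ⟨m, Subtype.ext (by simpa [hr', t] using hm)⟩, by
    have : r' ^ k = t ^ k := Subtype.ext (by simpa [hr', t] using hrk')
    simp [this]⟩
  have h3 : t = r' := h1.trans h2.symm
  rw [← hr', ← h3]
end
end

section
open Polynomial Module

section
variable {L V : Type*} [Field L] [AddCommGroup V] [Module L V]

theorem finite_weights [FiniteDimensional L V] {ι : Type*} (f : ι → End L V)
    (hc : ∀ i j, Commute (f i) (f j)) :
    {χ : ι → L | ∃ v ≠ 0, ∀ i, f i v = χ i • v}.Finite := by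
  have h1 := End.independent_iInf_maxGenEigenspace_of_forall_mapsTo f
    (fun i j φ => End.mapsTo_maxGenEigenspace_of_comm (hc j i) φ)
  refine (WellFoundedGT.finite_ne_bot_of_iSupIndep h1).subset ?_
  rintro χ ⟨v, hv, h⟩
  simp only [Set.mem_ofPred_eq, ne_eq]
  intro hbot
  apply hv
  rw [← Submodule.mem_bot L, ← hbot, Submodule.mem_iInf]
  intro i
  rw [End.mem_maxGenEigenspace]
  exact ⟨1, by simp [h i]⟩

theorem exists_weight [IsAlgClosed L] [FiniteDimensional L V] [Nontrivial V] {ι : Type*}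
    (f : ι → End L V) (hc : ∀ i j, Commute (f i) (f j)) :
    ∃ χ : ι → L, ∃ v ≠ 0, ∀ i, f i v = χ i • v := by
  let P : Set (Submodule L V) := {U | U ≠ ⊥ ∧ ∀ i, ∀ u ∈ U, f i u ∈ U}
  have hP : P.Nonempty := ⟨⊤, top_ne_bot, by simp⟩
  have wf : WellFounded ((· < ·) : Submodule L V → Submodule L V → Prop) := wellFounded_lt
  let U := wf.min P hP
  obtain ⟨hU0, hUi⟩ : U ∈ P := wf.min_mem P hP
  have key : ∀ i, ∃ c : L, ∀ u ∈ U, f i u = c • u := by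
    intro i
    have : Nontrivial U := Submodule.nontrivial_iff_ne_bot.2 hU0
    obtain ⟨c, hcc⟩ := End.exists_eigenvalue ((f i).restrict (hUi i))
    obtain ⟨w, hw⟩ := hcc.exists_hasEigenvector
    have hw1 := hw.apply_eq_smul
    refine ⟨c, ?_⟩
    have hmem : U ⊓ End.eigenspace (f i) c ∈ P := by
      refine ⟨?_, ?_⟩
      · intro hb
        have : (w : V) ∈ U ⊓ End.eigenspace (f i) c :=
          ⟨w.2, End.mem_eigenspace_iff.2 (by simpa using congrArg Subtype.val hw1)⟩
        rw [hb, Submodule.mem_bot] at this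
        exact hw.2 (Subtype.ext this)
      · rintro j u ⟨hu1, hu2⟩
        refine ⟨hUi j u hu1, ?_⟩
        rw [SetLike.mem_coe, End.mem_eigenspace_iff] at hu2
        rw [SetLike.mem_coe, End.mem_eigenspace_iff]
        have := LinearMap.congr_fun (hc i j) u
        simp only [End.mul_apply] at this
        rw [this, hu2, map_smul]
    have hnlt := wf.not_lt_min P hmem
    have heq : U ⊓ End.eigenspace (f i) c = U := by
      by_contra hne
      exact hnlt (lt_of_le_of_ne inf_le_left hne)
    intro u hu
    rw [← heq] at hu
    exact End.mem_eigenspace_iff.1 hu.2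
  choose χ hχ using key
  obtain ⟨v, hv, hv0⟩ := Submodule.exists_mem_ne_zero_of_ne_bot hU0
  exact ⟨χ, v, hv0, fun i => hχ i v hv⟩

theorem perm_weight [FiniteDimensional L V] {ι : Type*} (f : ι → End L V)
    (hc : ∀ i j, Commute (f i) (f j)) (x : End L V) (hx : Function.Injective x)
    (σ : Equiv.Perm ι) (hσ : ∀ i v, f i (x v) = x (f (σ i) v)) (χ : ι → L)
    (hχ : ∃ v ≠ 0, ∀ i, f i v = χ i • v) :
    ∃ k : ℕ, 0 < k ∧ ∀ v, (∀ i, f i v = χ i • v) → ∀ i, f i ((x ^ k) v) = χ i • (x ^ k) v := by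
  have h1 : ∀ (k : ℕ) v, (∀ i, f i v = χ i • v) →
      ∀ i, f i ((x ^ k) v) = χ ((σ ^ k) i) • (x ^ k) v := by
    intro k v hv
    induction k with
    | zero => simpa using hv
    | succ k ih =>
      intro i
      rw [pow_succ', End.mul_apply, hσ, ih, map_smul, pow_succ, Equiv.Perm.mul_apply]
  have hinj : ∀ k : ℕ, Function.Injective (x ^ k) := by
    intro k; rw [End.coe_pow]; exact hx.iterate k
  obtain ⟨v, hv0, hv⟩ := hχ
  have hmaps : ∀ k : ℕ, (fun i => χ ((σ ^ k) i)) ∈ {χ : ι → L | ∃ v ≠ 0, ∀ i, f i v = χ i • v} := by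
    intro k
    exact ⟨(x ^ k) v, fun h => hv0 (hinj k (by simpa using h)), h1 k v hv⟩
  have : Finite {χ : ι → L | ∃ v ≠ 0, ∀ i, f i v = χ i • v} := finite_weights f hc
  obtain ⟨m, n, hmn, he⟩ := Finite.exists_ne_map_eq_of_infinite
    (fun k : ℕ => (⟨_, hmaps k⟩ : {χ : ι → L | ∃ v ≠ 0, ∀ i, f i v = χ i • v}))
  have he' : ∀ i, χ ((σ ^ m) i) = χ ((σ ^ n) i) := fun i => congrFun (congrArg Subtype.val he) i
  have fin : ∀ m n : ℕ, m < n → (∀ i, χ ((σ ^ m) i) = χ ((σ ^ n) i)) → 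
      ∃ k : ℕ, 0 < k ∧ ∀ i, χ ((σ ^ k) i) = χ i := by
    intro m n hlt he
    refine ⟨n - m, by omega, fun i => ?_⟩
    have := he ((σ ^ m)⁻¹ i)
    rw [← Equiv.Perm.mul_apply, mul_inv_cancel, Equiv.Perm.one_apply] at this
    rw [this]
    congr 1
    rw [← Equiv.Perm.mul_apply, ← div_eq_mul_inv]
    congr 1
    rw [eq_div_iff_mul_eq', ← pow_add]
    congr 1; omega
  obtain ⟨k, hk, hk'⟩ : ∃ k : ℕ, 0 < k ∧ ∀ i, χ ((σ ^ k) i) = χ i := by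
    rcases lt_or_gt_of_ne hmn with h | h
    · exact fin m n h he'
    · exact fin n m h fun i => (he' i).symm
  exact ⟨k, hk, fun v hv i => by rw [h1 k v hv i, hk']⟩

theorem aeval_intertwine {V' : Type*} [AddCommGroup V'] [Module L V'] (π : V →ₗ[L] V')
    (T : End L V) (T' : End L V') (h : ∀ v, π (T v) = T' (π v)) (q : L[X]) (v : V) :
    π (aeval T q v) = aeval T' q (π v) := by
  induction q using Polynomial.induction_on' with
  | add p q hp hq => simp [hp, hq]
  | monomial n a => 
    have : ∀ n : ℕ, π ((T ^ n) v) = (T' ^ n) (π v) := by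
      intro n
      induction n with
      | zero => simp
      | succ n ih => rw [pow_succ', pow_succ', End.mul_apply, End.mul_apply, h, ih]
    simp [aeval_monomial, End.mul_apply, this, Module.algebraMap_end_apply]

theorem neat_mem {T : End L V} (hT : PolyNeat T) {k : ℕ} (hk : 0 < k) (W : Submodule L V)
    (h : ∀ w ∈ W, (T ^ k) w ∈ W) : ∀ w ∈ W, T w ∈ W := by
  obtain ⟨q, hq⟩ := hT k hk
  intro w hw
  have := aeval_intertwine W.subtype ((T ^ k).restrict h) (T ^ k) (fun v => rfl) q ⟨w, hw⟩
  rw [← hq] at this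
  simp only [Submodule.subtype_apply] at this
  rw [← this]
  exact Subtype.prop _

theorem neat_comm {T Y : End L V} (hT : PolyNeat T) {k : ℕ} (hk : 0 < k)
    (h : Commute (T ^ k) Y) : Commute T Y := by
  obtain ⟨q, hq⟩ := hT k hk
  have := aeval_intertwine Y (T ^ k) (T ^ k) (fun v => (LinearMap.congr_fun h v).symm) q
  rw [← hq] at this
  exact LinearMap.ext fun v => (this v).symm

theorem neat_inj {V' : Type*} [AddCommGroup V'] [Module L V'] (π : V →ₗ[L] V')
    (hπ : Function.Injective π)
    (T : End L V) (T' : End L V') (h : ∀ v, π (T v) = T' (π v)) (hT : PolyNeat T') :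
    PolyNeat T := by
  intro k hk
  obtain ⟨q, hq⟩ := hT k hk
  refine ⟨q, LinearMap.ext fun v => hπ ?_⟩
  have hk' : ∀ v, π ((T ^ k) v) = (T' ^ k) (π v) := fun v => by
    simpa using aeval_intertwine π T T' h (X ^ k) v
  rw [aeval_intertwine π (T ^ k) (T' ^ k) hk', ← hq, h]

theorem neat_surj {V' : Type*} [AddCommGroup V'] [Module L V'] (π : V →ₗ[L] V')
    (hπ : Function.Surjective π)
    (T : End L V) (T' : End L V') (h : ∀ v, π (T v) = T' (π v)) (hT : PolyNeat T) :
    PolyNeat T' := by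
  intro k hk
  obtain ⟨q, hq⟩ := hT k hk
  refine ⟨q, LinearMap.ext fun v => ?_⟩
  obtain ⟨v, rfl⟩ := hπ v
  have hk' : ∀ v, π ((T ^ k) v) = (T' ^ k) (π v) := fun v => by
    simpa using aeval_intertwine π T T' h (X ^ k) v
  rw [← aeval_intertwine π (T ^ k) (T' ^ k) hk', ← hq, h]

theorem neat_scalar {T : End L V} (hT : PolyNeat T) {k : ℕ} (hk : 0 < k) (c : L)
    (h : T ^ k = c • 1) : ∃ c : L, T = c • 1 := by
  obtain ⟨q, hq⟩ := hT k hk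
  refine ⟨q.eval c, ?_⟩
  rw [hq, h, ← Algebra.algebraMap_eq_smul_one, ← Algebra.algebraMap_eq_smul_one,
    aeval_algebraMap_apply]
  simp

end

section
variable {L V G : Type*} [Field L] [AddCommGroup V] [Module L V] [Group G]

theorem rep_inj (ρ : Representation L G V) (g : G) : Function.Injective (ρ g) :=
  (ρ.apply_bijective g).1

theorem inv_of_gen (ρ : Representation L G V) (X : Set G) (hX : Subgroup.closure X = ⊤)
    [FiniteDimensional L V] (W : Submodule L V) (h : ∀ x ∈ X, ∀ w ∈ W, ρ x w ∈ W) (g : G) :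
    ∀ w ∈ W, ρ g w ∈ W := by
  have hg : g ∈ Subgroup.closure X := hX ▸ Subgroup.mem_top g
  induction hg using Subgroup.closure_induction with
  | mem x hx => exact h x hx
  | one => simp
  | mul x y _ _ hx hy => 
    intro w hw
    rw [map_mul]
    exact hx _ (hy _ hw)
  | inv x _ hx => 
    intro w hw
    have hs : Function.Surjective ((ρ x).restrict hx) := by
      apply LinearMap.surjective_of_injective
      intro a b hab
      exact Subtype.ext (rep_inj ρ x (congrArg Subtype.val hab))
    obtain ⟨u, hu⟩ := hs ⟨w, hw⟩
    have hu' : ρ x u = w := congrArg Subtype.val hu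
    rw [← hu']
    simp

def IsIrr (ρ : Representation L G V) : Prop :=
  ∀ W : Submodule L V, (∀ g, ∀ w ∈ W, ρ g w ∈ W) → W = ⊥ ∨ W = ⊤

theorem scalar_of_comm [IsAlgClosed L] [FiniteDimensional L V] [Nontrivial V]
    (ρ : Representation L G V) (X : Set G)
    (hX : Subgroup.closure X = ⊤) (hN : ∀ x ∈ X, PolyNeat (ρ x)) (irr : IsIrr ρ)
    (Z : Set G) (hZ : ∀ g, ∀ z ∈ Z, g * z * g⁻¹ ∈ Z)
    (hc : ∀ a ∈ Z, ∀ b ∈ Z, Commute (ρ a) (ρ b)) : ∀ z ∈ Z, ∃ c : L, ρ z = c • 1 := by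
  let f : Z → End L V := fun z => ρ z
  have hcf : ∀ i j, Commute (f i) (f j) := fun i j => hc _ i.2 _ j.2
  obtain ⟨χ, hχ⟩ := exists_weight f hcf
  let W : Submodule L V := ⨅ i, End.eigenspace (f i) (χ i)
  have hW : ∀ w, w ∈ W ↔ ∀ i, f i w = χ i • w := by
    intro w
    simp only [W, Submodule.mem_iInf, End.mem_eigenspace_iff]
  have hinv : ∀ g, ∀ w ∈ W, ρ g w ∈ W := by
    refine inv_of_gen ρ X hX W fun x hx => ?_
    let σ : Equiv.Perm Z :=
      { toFun := fun z => ⟨x⁻¹ * z * x, by simpa using hZ x⁻¹ z z.2⟩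
        invFun := fun z => ⟨x * z * x⁻¹, by simpa using hZ x z z.2⟩
        left_inv := fun z => by ext; simp [mul_assoc]
        right_inv := fun z => by ext; simp [mul_assoc] }
    obtain ⟨k, hk, hk'⟩ := perm_weight f hcf (ρ x) (rep_inj ρ x) σ (by
      intro i v
      simp only [f, σ, Equiv.coe_fn_mk, ← End.mul_apply, ← map_mul]
      simp [mul_assoc]) χ hχ
    refine neat_mem (hN x hx) hk W fun w hw => ?_
    rw [hW] at hw ⊢
    exact hk' w hw
  rcases irr W hinv with h | h
  · obtain ⟨v, hv0, hv⟩ := hχ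
    exact absurd ((Submodule.mem_bot L).1 (h ▸ (hW v).2 hv)) hv0
  · intro z hz
    refine ⟨χ ⟨z, hz⟩, LinearMap.ext fun v => ?_⟩
    have : v ∈ W := h ▸ Submodule.mem_top
    simpa [f] using (hW v).1 this ⟨z, hz⟩

theorem root_of_det [FiniteDimensional L V] (ρ : Representation L G V) (a b : G) (c : L)
    (h : ρ (a * b) = c • ρ (b * a)) : c ^ finrank L V = 1 := by
  have h1 := congrArg LinearMap.det h
  rw [LinearMap.det_smul, map_mul, map_mul, map_mul, map_mul, mul_comm (LinearMap.det (ρ b))] at h1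
  have hu : ∀ g, LinearMap.det (ρ g) ≠ 0 := by
    intro g h0
    have : LinearMap.det (ρ g) * LinearMap.det (ρ g⁻¹) = 1 := by
      rw [← map_mul, ← map_mul]; simp
    simp [h0] at this
  have h2 := mul_ne_zero (hu a) (hu b)
  exact mul_right_cancel₀ h2 (by rw [← h1, one_mul])

theorem scalar_step [IsAlgClosed L] [FiniteDimensional L V] [Nontrivial V]
    (ρ : Representation L G V) (X : Set G)
    (hX : Subgroup.closure X = ⊤) (hN : ∀ x ∈ X, PolyNeat (ρ x)) (irr : IsIrr ρ)
    (A : Subgroup G) (hA : A.Normal) 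
    (hsc : ∀ z ∈ ⁅A, A⁆, ∃ c : L, ρ z = c • 1) : ∀ z ∈ A, ∃ c : L, ρ z = c • 1 := by
  have hcomm : ∀ a ∈ A, ∀ b ∈ A, ∃ c : L, ρ (b * a) = c • ρ (a * b) := by
    intro a ha b hb
    obtain ⟨c, hc⟩ := hsc _ (Subgroup.commutator_mem_commutator hb ha)
    refine ⟨c, ?_⟩
    rw [commutatorElement_def] at hc
    have : b * a = (b * a * b⁻¹ * a⁻¹) * (a * b) := by group
    rw [this, map_mul, hc]; simp
  let Z : Set G := {z | z ∈ A ∧ ∀ b ∈ A, Commute (ρ b) (ρ z)}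
  have hZs : ∀ z ∈ Z, ∃ c : L, ρ z = c • 1 := by
    refine scalar_of_comm ρ X hX hN irr Z ?_ ?_
    · rintro g z ⟨hz, hz'⟩
      refine ⟨hA.conj_mem z hz g, fun b hb => ?_⟩
      have h1 := hz' (g⁻¹ * b * g) (by simpa using hA.conj_mem b hb g⁻¹)
      have h2 : ρ g * (ρ (g⁻¹ * b * g) * ρ z) * ρ g⁻¹ = ρ g * (ρ z * ρ (g⁻¹ * b * g)) * ρ g⁻¹ := by
        rw [h1.eq]
      simp only [← map_mul] at h2
      show ρ b * ρ _ = ρ _ * ρ b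
      simp only [← map_mul]
      convert h2 using 2 <;> group
    · rintro a ⟨ha, _⟩ b ⟨_, hb⟩
      exact hb a ha
  intro a ha
  let κ : Representation L G (V →ₗ[L] V) := ρ.linHom ρ
  have hκ : ∀ b u, κ b (ρ u) = ρ (b * u * b⁻¹) := by
    intro b u
    simp only [κ, Representation.linHom_apply, map_mul]
    rfl
  let f : A → End L (V →ₗ[L] V) := fun b => κ b
  have hcf : ∀ i j, Commute (f i) (f j) := by
    rintro ⟨i, hi⟩ ⟨j, hj⟩
    obtain ⟨c, hc⟩ := hcomm j hj i hi
    have hc0 : c ≠ 0 := by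
      intro h0
      have := root_of_det ρ _ _ _ hc
      rw [h0, zero_pow finrank_pos.ne'] at this
      exact zero_ne_one this
    obtain ⟨c', hc'⟩ : ∃ c' : L, ρ (i * j)⁻¹ = c' • ρ (j * i)⁻¹ ∧ c * c' = 1 := by
      refine ⟨c⁻¹, ?_, mul_inv_cancel₀ hc0⟩
      have e1 : ρ (i * j)⁻¹ * ρ (i * j) * ρ (j * i)⁻¹ = ρ (j * i)⁻¹ := by
        rw [← map_mul]; simp
      rw [hc] at e1
      rw [mul_smul_comm, smul_mul_assoc, mul_assoc, ← map_mul ρ (j * i)] at e1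
      rw [← e1, smul_smul, inv_mul_cancel₀ hc0]
      simp
    show κ i * κ j = κ j * κ i
    rw [← map_mul, ← map_mul]
    refine LinearMap.ext fun Y => ?_
    simp only [κ, Representation.linHom_apply]
    rw [hc, hc'.1]
    rw [LinearMap.comp_smul, LinearMap.comp_smul, LinearMap.smul_comp, smul_smul, mul_comm, hc'.2, one_smul]
  have hw : ∀ b : A, ∃ c : L, f b (ρ a) = c • ρ a := by
    rintro ⟨b, hb⟩
    obtain ⟨c, hc⟩ := hcomm a ha b hb
    refine ⟨c, ?_⟩
    simp only [f]
    rw [hκ, map_mul, hc, smul_mul_assoc, ← map_mul]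
    simp
  choose χ hχ using hw
  have hρ0 : ρ a ≠ 0 := by
    intro h0
    obtain ⟨v, hv⟩ := exists_ne (0 : V)
    exact hv (rep_inj ρ a (by simp [h0]))
  have hxa : ∀ x ∈ X, Commute (ρ x) (ρ a) := by
    intro x hx
    let σ : Equiv.Perm A :=
      { toFun := fun z => ⟨x⁻¹ * z * x, by simpa using hA.conj_mem z z.2 x⁻¹⟩
        invFun := fun z => ⟨x * z * x⁻¹, by simpa using hA.conj_mem z z.2 x⟩
        left_inv := fun z => by ext; simp [mul_assoc]
        right_inv := fun z => by ext; simp [mul_assoc] }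
    obtain ⟨k, hk, hk'⟩ := perm_weight f hcf (κ x) (rep_inj κ x) σ (by
      intro i v
      simp only [f, σ, Equiv.coe_fn_mk, ← End.mul_apply, ← map_mul]
      simp [mul_assoc]) χ ⟨ρ a, hρ0, hχ⟩
    have hk2 := hk' (ρ a) hχ
    rw [← map_pow, hκ] at hk2
    set u := x ^ k * a * (x ^ k)⁻¹ with hu
    have huA : u ∈ A := hA.conj_mem a ha _
    have hz : u * a⁻¹ ∈ Z := by
      refine ⟨mul_mem huA (inv_mem ha), fun b hb => ?_⟩
      have h1 := hk2 ⟨b, hb⟩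
      have h2 := hχ ⟨b, hb⟩
      simp only [f] at h1 h2
      rw [hκ] at h1 h2
      set c := χ ⟨b, hb⟩
      have h3 : ρ (b * (u * a⁻¹)) * ρ (a * b⁻¹) = c • ρ u := by
        rw [← map_mul, ← h1]; congr 1; group
      have h4 : ρ (u * a⁻¹ * b) * ρ (a * b⁻¹) = c • ρ u := by
        rw [← map_mul]
        rw [show u * a⁻¹ * b * (a * b⁻¹) = (u * a⁻¹) * (b * a * b⁻¹) by group, map_mul, h2,
          mul_smul_comm, ← map_mul]
        congr 2; group
      have h5 := congrArg (· * ρ (a * b⁻¹)⁻¹) (h3.trans h4.symm)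
      simp only [mul_assoc, ← map_mul] at h5
      show ρ b * ρ _ = ρ _ * ρ b
      rw [← map_mul, ← map_mul]
      convert h5 using 2 <;> group
    obtain ⟨c, hc⟩ := hZs _ hz
    have hxc : ρ (x ^ k) * ρ a = c • (ρ a * ρ (x ^ k)) := by
      rw [← map_mul, show x ^ k * a = (u * a⁻¹) * (a * x ^ k) by rw [hu]; group, map_mul, hc]
      simp
    have hroot := root_of_det ρ (x ^ k) a c (by rw [map_mul, map_mul, hxc])
    have hpow : ∀ m : ℕ, (ρ (x ^ k)) ^ m * ρ a = c ^ m • (ρ a * (ρ (x ^ k)) ^ m) := by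
      intro m
      induction m with
      | zero => simp
      | succ m ih =>
        rw [pow_succ', mul_assoc, ih, mul_smul_comm, ← mul_assoc, hxc, smul_mul_assoc, smul_smul,
          mul_assoc, ← pow_succ', ← pow_succ]
    have h6 := hpow (finrank L V)
    rw [hroot, one_smul, map_pow, ← pow_mul] at h6
    exact neat_comm (hN x hx) (Nat.mul_pos hk finrank_pos) h6
  obtain ⟨c, hc⟩ := End.exists_eigenvalue (ρ a)
  have hinv := inv_of_gen ρ X hX (End.eigenspace (ρ a) c) (by
    intro x hx w hw
    rw [End.mem_eigenspace_iff] at hw ⊢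
    have := LinearMap.congr_fun (hxa x hx) w
    simp only [End.mul_apply] at this
    rw [← this, hw, map_smul])
  rcases irr _ hinv with h | h
  · exact absurd h hc
  · refine ⟨c, LinearMap.ext fun v => ?_⟩
    have : v ∈ End.eigenspace (ρ a) c := h ▸ Submodule.mem_top
    simpa using End.mem_eigenspace_iff.1 this

theorem scalar_all [IsAlgClosed L] [FiniteDimensional L V] [Nontrivial V]
    (ρ : Representation L G V) (X : Set G)
    (hX : Subgroup.closure X = ⊤) (hN : ∀ x ∈ X, PolyNeat (ρ x)) (irr : IsIrr ρ)
    (S : ℕ → Subgroup G) (hSn : ∀ j, (S j).Normal) (hSc : ∀ j, ⁅S j, S j⁆ ≤ S (j + 1))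
    (l : ℕ) (hl : ∀ g ∈ S l, ρ g = 1) (h0 : ∀ g, ∃ k : ℕ, 0 < k ∧ g ^ k ∈ S 0) (g : G) :
    ∃ c : L, ρ g = c • 1 := by
  have h1 : ∀ i ≤ l, ∀ z ∈ S (l - i), ∃ c : L, ρ z = c • 1 := by
    intro i
    induction i with
    | zero => intro _ z hz; exact ⟨1, by simpa using hl z hz⟩
    | succ i ih =>
      intro hi
      refine scalar_step ρ X hX hN irr _ (hSn _) fun z hz => ?_
      refine ih (by omega) z ?_
      have := hSc _ hz
      rwa [show l - (i + 1) + 1 = l - i by omega] at this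
  have h2 := h1 l le_rfl
  rw [Nat.sub_self] at h2
  have hg : g ∈ Subgroup.closure X := hX ▸ Subgroup.mem_top g
  induction hg using Subgroup.closure_induction with
  | mem x hx =>
    obtain ⟨k, hk, hk'⟩ := h0 x
    obtain ⟨c, hc⟩ := h2 _ hk'
    exact neat_scalar (hN x hx) hk c (by rw [← map_pow, hc])
  | one => exact ⟨1, by simp⟩
  | mul x y _ _ hx hy =>
    obtain ⟨c, hc⟩ := hx
    obtain ⟨d, hd⟩ := hy
    exact ⟨c * d, by rw [map_mul, hc, hd]; simp [smul_smul, mul_comm]⟩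
  | inv x _ hx =>
    obtain ⟨c, hc⟩ := hx
    have e : ρ x * ρ x⁻¹ = 1 := by rw [← map_mul]; simp
    rw [hc, smul_mul_assoc, one_mul] at e
    have hc0 : c ≠ 0 := by
      rintro rfl
      simp at e
    exact ⟨c⁻¹, by rw [← e, smul_smul, inv_mul_cancel₀ hc0, one_smul]⟩

theorem solv_bound [IsAlgClosed L] (X : Set G)
    (hX : Subgroup.closure X = ⊤)
    (S : ℕ → Subgroup G) (hSn : ∀ j, (S j).Normal) (hSc : ∀ j, ⁅S j, S j⁆ ≤ S (j + 1))
    (l : ℕ) (h0 : ∀ g, ∃ k : ℕ, 0 < k ∧ g ^ k ∈ S 0) (n : ℕ) :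
    ∀ (V : Type*) [AddCommGroup V] [Module L V] [FiniteDimensional L V]
    (ρ : Representation L G V) (_ : finrank L V ≤ n)
    (_ : ∀ x ∈ X, PolyNeat (ρ x)) (_ : ∀ g ∈ S l, ρ g = 1),
    ∀ g ∈ derivedSeries G n, ρ g = 1 := by
  induction n with
  | zero =>
    intro V _ _ _ ρ hV hN hl g _
    have := finrank_zero_iff.1 (Nat.le_zero.1 hV)
    exact LinearMap.ext fun v => Subsingleton.elim _ _
  | succ n ih =>
    intro V _ _ _ ρ hV hN hl g hg
    rcases subsingleton_or_nontrivial V with _ | _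
    · exact LinearMap.ext fun v => Subsingleton.elim _ _
    by_cases irr : IsIrr ρ
    · have hsc := scalar_all ρ X hX hN irr S hSn hSc l hl h0
      have : derivedSeries G 1 ≤ ρ.ker := by
        rw [derivedSeries_one, commutator_def, Subgroup.commutator_le]
        intro a _ b _
        obtain ⟨c, hc⟩ := hsc a
        rw [MonoidHom.mem_ker, commutatorElement_def]
        have e : ρ (a * b) = ρ (b * a) := by
          rw [map_mul, map_mul, hc]; simp
        rw [show a * b * a⁻¹ * b⁻¹ = a * b * (b * a)⁻¹ by group, map_mul, e, ← map_mul]; simp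
      exact this (derivedSeries_antitone G (by omega : 1 ≤ n + 1) hg)
    · unfold IsIrr at irr
      push Not at irr
      obtain ⟨W, hW, hW0, hW1⟩ := irr
      have d0 := Submodule.finrank_quotient_add_finrank W
      have d1 : 0 < finrank L W := by
        rw [Nat.pos_iff_ne_zero]
        intro h
        exact hW0 (Submodule.finrank_eq_zero.1 h)
      have d2 : finrank L W < finrank L V := Submodule.finrank_lt hW1
      have r1 := ih W (ρ.subrepresentation W hW) (by omega)
        (fun x hx => neat_inj W.subtype W.subtype_injective _ _ (fun v => rfl) (hN x hx))
        (fun g hg => LinearMap.ext fun v => Subtype.ext (by simp [hl g hg]))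
      have r2 := ih (V ⧸ W) (ρ.quotient W hW) (by omega)
        (fun x hx => neat_surj W.mkQ W.mkQ_surjective _ _ (fun v => rfl) (hN x hx))
        (fun g hg => by
          refine LinearMap.ext fun v => ?_
          obtain ⟨v, rfl⟩ := W.mkQ_surjective v
          simp [hl g hg])
      have r1' : ∀ g ∈ derivedSeries G n, ∀ w ∈ W, ρ g w = w := fun g hg w hw =>
        congrArg Subtype.val (LinearMap.congr_fun (r1 g hg) ⟨w, hw⟩)
      have r2' : ∀ g ∈ derivedSeries G n, ∀ v, ρ g v - v ∈ W := fun g hg v => by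
        have := LinearMap.congr_fun (r2 g hg) (W.mkQ v)
        exact (Submodule.Quotient.eq W).1 this
      have : derivedSeries G (n + 1) ≤ ρ.ker := by
        rw [derivedSeries_succ, Subgroup.commutator_le]
        intro a ha b hb
        rw [MonoidHom.mem_ker, commutatorElement_def]
        have e : ρ (a * b) = ρ (b * a) := by
          refine LinearMap.ext fun v => ?_
          rw [map_mul, map_mul, End.mul_apply, End.mul_apply]
          have h1 := r1' a ha _ (r2' b hb v)
          have h2 := r1' b hb _ (r2' a ha v)
          rw [map_sub, sub_eq_iff_eq_add] at h1 h2
          rw [h1, h2]; abel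
        rw [show a * b * a⁻¹ * b⁻¹ = a * b * (b * a)⁻¹ by group, map_mul, e, ← map_mul]; simp
      exact this hg
end
end

section
open Polynomial Module

theorem dvd_fact_of_totient (m B : ℕ) (hm : 0 < m) (h : m.totient ≤ B) : m ∣ (2 * B).factorial := by
  rw [Nat.dvd_iff_prime_pow_dvd_dvd]
  intro p k hp hd
  rcases Nat.eq_zero_or_pos k with rfl | hk
  · simp
  apply Nat.dvd_factorial (pow_pos hp.pos k)
  have h1 : (p ^ k).totient ≤ B :=
    (Nat.le_of_dvd (Nat.totient_pos.2 hm) (Nat.totient_dvd_of_dvd hd)).trans h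
  rw [Nat.totient_prime_pow hp hk] at h1
  obtain ⟨j, rfl⟩ : ∃ j, k = j + 1 := ⟨k - 1, by omega⟩
  have h2 := hp.two_le
  rw [Nat.add_sub_cancel] at h1
  rw [pow_succ]
  calc p ^ j * p ≤ p ^ j * (2 * (p - 1)) := Nat.mul_le_mul_left _ (by omega)
    _ = 2 * (p ^ j * (p - 1)) := by ring
    _ ≤ 2 * B := by omega

set_option linter.unusedSectionVars false
section
variable {Qb : Type} [Field Qb] [CharZero Qb] [IsAlgClosed Qb] [Algebra ℚ Qb] [Algebra.IsAlgebraic ℚ Qb]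

theorem deg_root (F : IntermediateField ℚ Qb) [FiniteDimensional ℚ F] (p : F[X]) (hp : p ≠ 0)
    (a : Qb) (ha : aeval a p = 0) :
    finrank ℚ (IntermediateField.adjoin ℚ {a}) ≤ finrank ℚ F * p.natDegree := by
  have hi : IsIntegral F a := (Algebra.IsIntegral.isIntegral (R := ℚ) a).tower_top
  have h1 : finrank F (IntermediateField.adjoin F {a}) ≤ p.natDegree := by
    rw [IntermediateField.adjoin.finrank hi]
    exact natDegree_le_of_dvd (minpoly.dvd F a ha) hp
  have : FiniteDimensional F (IntermediateField.adjoin F {a}) :=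
    IntermediateField.adjoin.finiteDimensional hi
  have h2 : finrank ℚ F * finrank F (IntermediateField.adjoin F {a})
    = finrank ℚ (IntermediateField.adjoin F {a}) := by
    have : Module.Free F (IntermediateField.adjoin F {a}) := Module.Free.of_divisionRing _ _
    exact finrank_mul_finrank _ _ _
  have : FiniteDimensional ℚ (IntermediateField.adjoin F {a}) := FiniteDimensional.trans ℚ F _
  let E := (IntermediateField.adjoin F {a}).restrictScalars ℚ
  have hE : FiniteDimensional ℚ E := this
  have h3 : IntermediateField.adjoin ℚ {a} ≤ E := by
    rw [IntermediateField.adjoin_simple_le_iff]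
    exact IntermediateField.mem_adjoin_simple_self F a
  have h4 := IntermediateField.finrank_le_of_le_right h3
  exact h4.trans ((le_of_eq h2.symm).trans (Nat.mul_le_mul_left _ h1))

theorem root_unity_bound (a b : Qb) (B : ℕ) (hb : b ≠ 0)
    (h1 : finrank ℚ (IntermediateField.adjoin ℚ {a}) ≤ B)
    (h2 : finrank ℚ (IntermediateField.adjoin ℚ {b}) ≤ B)
    (k : ℕ) (hk : 0 < k) (h : a ^ k = b ^ k) :
    a ^ (2 * (B * B)).factorial = b ^ (2 * (B * B)).factorial := by
  have hz : (a / b) ^ k = 1 := by rw [div_pow, h, div_self (pow_ne_zero _ hb)]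
  have hord : 0 < orderOf (a / b) := orderOf_pos_iff.2 (isOfFinOrder_iff_pow_eq_one.2 ⟨k, hk, hz⟩)
  have hprim := IsPrimitiveRoot.orderOf (a / b)
  have fa : FiniteDimensional ℚ (IntermediateField.adjoin ℚ {a}) :=
    IntermediateField.adjoin.finiteDimensional (Algebra.IsIntegral.isIntegral a)
  have fb : FiniteDimensional ℚ (IntermediateField.adjoin ℚ {b}) :=
    IntermediateField.adjoin.finiteDimensional (Algebra.IsIntegral.isIntegral b)
  have hdeg : (orderOf (a / b)).totient ≤ B * B := by
    have e1 : cyclotomic (orderOf (a / b)) ℚ = minpoly ℚ (a / b) := by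
      convert cyclotomic_eq_minpoly_rat hprim hord
      exact Subsingleton.elim _ _
    rw [← natDegree_cyclotomic (orderOf (a / b)) ℚ, e1,
      ← IntermediateField.adjoin.finrank (Algebra.IsIntegral.isIntegral (a / b))]
    have hle : IntermediateField.adjoin ℚ {a / b} ≤
        IntermediateField.adjoin ℚ {a} ⊔ IntermediateField.adjoin ℚ {b} := by
      rw [IntermediateField.adjoin_simple_le_iff]
      exact div_mem ((le_sup_left : _ ≤ IntermediateField.adjoin ℚ {a} ⊔ _)
        (IntermediateField.mem_adjoin_simple_self ℚ a))
        ((le_sup_right : _ ≤ _ ⊔ IntermediateField.adjoin ℚ {b})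
        (IntermediateField.mem_adjoin_simple_self ℚ b))
    refine (IntermediateField.finrank_le_of_le_right hle).trans ?_
    exact (IntermediateField.finrank_sup_le _ _).trans (Nat.mul_le_mul h1 h2)
  have hd := dvd_fact_of_totient _ _ hord hdeg
  have := orderOf_dvd_iff_pow_eq_one.1 hd
  rwa [div_pow, div_eq_one_iff_eq (pow_ne_zero _ hb)] at this

noncomputable def stdRep (n : ℕ) (F : IntermediateField ℚ Qb) :
    Representation Qb (GL (Fin n) F) (Fin n → Qb) :=
  ((Matrix.toLinAlgEquiv' (R := Qb) (n := Fin n)).toAlgHom : _ →* _).comp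
    ((Units.coeHom _).comp (Matrix.GeneralLinearGroup.map (algebraMap F Qb)))

theorem stdRep_apply (n : ℕ) (F : IntermediateField ℚ Qb) (g : GL (Fin n) F) :
    stdRep n F g = Matrix.toLin' ((g : Matrix (Fin n) (Fin n) F).map (algebraMap F Qb)) := rfl

theorem stdRep_inj (n : ℕ) (F : IntermediateField ℚ Qb) (g : GL (Fin n) F)
    (h : stdRep n F g = 1) : g = 1 := by
  rw [stdRep_apply] at h
  have h2 : (g : Matrix (Fin n) (Fin n) F).map (algebraMap F Qb) = 1 := by
    apply (Matrix.toLin' (R := Qb)).injective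
    rw [h, Matrix.toLin'_one]; rfl
  ext i j
  have := congrFun (congrFun h2 i) j
  rw [Matrix.map_apply] at this
  refine Eq.trans this ?_
  by_cases hij : i = j <;> simp [Matrix.one_apply, hij]

theorem neat_pow (n : ℕ) (F : IntermediateField ℚ Qb) [FiniteDimensional ℚ F] (D : ℕ)
    (hD : finrank ℚ F ≤ D) (g : GL (Fin n) F) :
    PolyNeat (stdRep n F (g ^ (2 * ((D * n) * (D * n))).factorial)) := by
  set N := (2 * ((D * n) * (D * n))).factorial with hN
  have hNpos : 0 < N := Nat.factorial_pos _
  set T := stdRep n F g with hT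
  have hTu : IsUnit T := by
    refine IsUnit.of_mul_eq_one (stdRep n F g⁻¹) ?_
    rw [hT, ← map_mul]; simp
  have hdeg : ∀ a, a ∈ spectrum Qb T → a ≠ 0 ∧
      finrank ℚ (IntermediateField.adjoin ℚ {a}) ≤ D * n := by
    intro a ha
    refine ⟨?_, ?_⟩
    · rintro rfl
      exact (spectrum.zero_notMem_iff Qb).2 hTu ha
    · have hev := Module.End.hasEigenvalue_iff_mem_spectrum.2 ha
      have hroot := (Module.End.hasEigenvalue_iff_isRoot_charpoly T a).1 hev
      rw [hT, stdRep_apply, Matrix.charpoly_toLin', Matrix.charpoly_map] at hroot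
      have h1 := deg_root F (g : Matrix (Fin n) (Fin n) F).charpoly
        (Matrix.charpoly_monic _).ne_zero a (by
          rwa [IsRoot, eval_map_algebraMap] at hroot)
      rw [Matrix.charpoly_natDegree_eq_dim, Fintype.card_fin] at h1
      exact h1.trans (Nat.mul_le_mul_right _ hD)
  rw [map_pow, ← hT]
  apply neat_of_eig _ (hTu.pow N)
  intro a b ha hb k hk hab
  rw [Module.End.hasEigenvalue_iff_mem_spectrum] at ha hb
  have hsp := spectrum.map_pow_of_pos (𝕜 := Qb) T hNpos
  rw [hsp] at ha hb
  obtain ⟨a, ha, rfl⟩ := ha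
  obtain ⟨b, hb, rfl⟩ := hb
  simp only [← pow_mul] at hab ⊢
  exact root_unity_bound a b _ (hdeg b hb).1 (hdeg a ha).2 (hdeg b hb).2 _ (Nat.mul_pos hNpos hk) hab

theorem specialize (Qb : Type) [Field Qb] [IsAlgClosed Qb] [Algebra ℚ Qb] (R : Type*) [CommRing R] [IsDomain R] [Algebra ℚ R] [Algebra.FiniteType ℚ R] :
    ∃ D : ℕ, ∀ a : R, a ≠ 0 → ∃ (F : IntermediateField ℚ Qb) (_ : FiniteDimensional ℚ F)
      (φ : R →+* F), finrank ℚ F ≤ D ∧ φ a ≠ 0 := by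
  obtain ⟨s, g, ginj, gfin⟩ := exists_finite_inj_algHom_of_fg ℚ R
  let P := MvPolynomial (Fin s) ℚ
  let _ : Algebra P R := g.toRingHom.toAlgebra
  have hfin : Module.Finite P R := gfin
  have hint : Algebra.IsIntegral P R := inferInstance
  have hinj : Function.Injective (algebraMap P R) := ginj
  have hsc : IsScalarTower ℚ P R := IsScalarTower.of_algebraMap_eq fun x => (g.commutes x).symm
  obtain ⟨t, ht⟩ := hfin.fg_top
  refine ⟨t.card, fun a ha => ?_⟩
  have hb := Ideal.comap_ne_bot_of_integral_mem (R := P) ha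
    (Ideal.mem_span_singleton_self a) (Algebra.IsIntegral.isIntegral a)
  obtain ⟨b, hbm, hb0⟩ := Submodule.exists_mem_ne_zero_of_ne_bot hb
  obtain ⟨v, hv⟩ : ∃ v : Fin s → ℚ, MvPolynomial.eval v b ≠ 0 := by
    by_contra hcon
    push Not at hcon
    exact hb0 (MvPolynomial.funext fun v => by simpa using hcon v)
  let m : Ideal P := RingHom.ker (MvPolynomial.eval v)
  have hm : m.IsMaximal := RingHom.ker_isMaximal_of_surjective _ fun c => ⟨MvPolynomial.C c, MvPolynomial.eval_C c⟩
  obtain ⟨Q, -, hQp, hQ⟩ := Ideal.exists_ideal_over_prime_of_isIntegral m (⊥ : Ideal R) (by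
    intro x hx
    rw [Ideal.mem_comap, Ideal.mem_bot] at hx
    have : x = 0 := hinj (by rw [hx, map_zero])
    rw [this]; exact zero_mem _)
  have hQm : Q.IsMaximal := Ideal.isMaximal_of_isIntegral_of_isMaximal_comap Q (by
    rw [hQ]; exact hm)
  have haQ : a ∉ Q := by
    intro haQ
    apply hv
    have : b ∈ Q.comap (algebraMap P R) := by
      rw [Ideal.mem_comap] at hbm ⊢
      exact (Ideal.span_singleton_le_iff_mem Q).2 haQ hbm
    rw [hQ] at this
    exact this
  let _ : Field (R ⧸ Q) := Ideal.Quotient.field Q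
  let _ : Algebra ℚ (R ⧸ Q) := Ideal.Quotient.algebra ℚ
  classical
  let t' := t.image (Ideal.Quotient.mk Q)
  have hspan : Submodule.span ℚ (t' : Set (R ⧸ Q)) = ⊤ := by
    rw [eq_top_iff]
    rintro x -
    obtain ⟨r, rfl⟩ := Ideal.Quotient.mk_surjective x
    have hr : r ∈ Submodule.span P (t : Set R) := ht ▸ Submodule.mem_top
    induction hr using Submodule.span_induction with
    | mem x hx => exact Submodule.subset_span (Finset.mem_image_of_mem _ hx)
    | zero => simp
    | add x y _ _ hx hy => rw [map_add]; exact add_mem hx hy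
    | smul p x _ hx =>
      have : Ideal.Quotient.mk Q (p • x) = (MvPolynomial.eval v p) • Ideal.Quotient.mk Q x := by
        have h1 : p - MvPolynomial.C (MvPolynomial.eval v p) ∈ Q.comap (algebraMap P R) := by
          rw [hQ]; simp only [m, RingHom.mem_ker]
          rw [map_sub, sub_eq_zero]; exact (MvPolynomial.eval_C _).symm
        rw [Ideal.mem_comap, map_sub, ← Ideal.Quotient.eq] at h1
        rw [Algebra.smul_def, map_mul, h1, Algebra.smul_def]
        congr 1
        have h2 : algebraMap P R (MvPolynomial.C (MvPolynomial.eval v p)) =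
          algebraMap ℚ R (MvPolynomial.eval v p) := g.commutes _
        rw [h2]; rfl
      rw [this]
      exact Submodule.smul_mem _ _ hx
  have hfd : FiniteDimensional ℚ (R ⧸ Q) := ⟨⟨t', hspan⟩⟩
  have hcard : finrank ℚ (R ⧸ Q) ≤ t.card := by
    rw [← finrank_top, ← hspan]
    exact (finrank_span_finset_le_card t').trans Finset.card_image_le
  let ψ : (R ⧸ Q) →ₐ[ℚ] Qb := IsAlgClosed.lift
  let e := AlgEquiv.ofInjectiveField ψ
  refine ⟨ψ.fieldRange, ?_, (ψ.rangeRestrict : (R ⧸ Q) →+* ψ.range).comp (Ideal.Quotient.mk Q), ?_, ?_⟩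
  · exact Module.Finite.equiv e.toLinearEquiv
  · exact (le_of_eq e.toLinearEquiv.finrank_eq.symm).trans hcard
  · intro h0
    apply haQ
    rw [← Ideal.Quotient.eq_zero_iff_mem]
    apply ψ.injective
    rw [map_zero]
    exact congrArg Subtype.val h0
end
end

section
open Polynomial Module

theorem vs_chain {G : Type*} [Group G] (h : IsVirtuallySolvable G) :
    ∃ (U : ℕ → Subgroup G) (l : ℕ), (∀ j, (U j).Normal) ∧ (∀ j, ⁅U j, U j⁆ ≤ U (j + 1)) ∧
      U l = ⊥ ∧ ∀ g, ∃ k : ℕ, 0 < k ∧ g ^ k ∈ U 0 := by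
  obtain ⟨T, hT, hs⟩ := h
  let C := T.normalCore
  have hs' : Group.IsSolvable T := hs
  have hC : Group.IsSolvable C := by
    have : C ≤ T := T.normalCore_le
    exact Group.isSolvable_of_isSolvable_injective (Subgroup.inclusion_injective this)
  let U : ℕ → Subgroup G := fun j => Nat.rec C (fun _ A => ⁅A, A⁆) j
  have hU : ∀ j, U (j + 1) = ⁅U j, U j⁆ := fun j => rfl
  have hUn : ∀ j, (U j).Normal := by
    intro j
    induction j with
    | zero => exact T.normalCore_normal
    | succ j ih => exact @Subgroup.commutator_normal G _ (U j) (U j) ih ih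
  have hUd : ∀ j, (derivedSeries C j).map C.subtype = U j := by
    intro j
    induction j with
    | zero => rw [derivedSeries_zero, ← MonoidHom.range_eq_map, Subgroup.range_subtype]; rfl
    | succ j ih => rw [derivedSeries_succ, Subgroup.map_commutator, ih, hU]
  obtain ⟨l, hl⟩ := hC.solvable
  refine ⟨U, l, hUn, fun j => le_of_eq (hU j).symm, ?_, ?_⟩
  · rw [← hUd, hl, Subgroup.map_bot]
  · intro g
    obtain ⟨k, hk, -, hk'⟩ := Subgroup.exists_pow_mem_of_index_ne_zero
      (Subgroup.FiniteIndex.index_ne_zero (H := C)) g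
    exact ⟨k, hk, hk'⟩

/-- separability data for a matrix over a ring -/
def SepData {n : ℕ} {R : Type*} [CommRing R] (g : GL (Fin n) R) : Prop :=
  ∃ p u v : R[X], u * p + v * derivative p = 1 ∧ aeval (g : Matrix (Fin n) (Fin n) R) p = 0

theorem ss_of_sepData {n : ℕ} {R F : Type*} [CommRing R] [Field F] (φ : R →+* F)
    (g : GL (Fin n) R) (h : SepData g) :
    IsSemisimpleElt (Matrix.GeneralLinearGroup.map φ g) := by
  obtain ⟨p, u, v, h1, h2⟩ := h
  have hsep : (p.map φ).Separable := by
    refine ⟨u.map φ, v.map φ, ?_⟩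
    rw [derivative_map, ← Polynomial.map_mul, ← Polynomial.map_mul, ← Polynomial.map_add, h1,
      Polynomial.map_one]
  refine Module.End.isSemisimple_of_squarefree_aeval_eq_zero hsep.squarefree ?_
  have h3 : aeval ((Matrix.GeneralLinearGroup.map φ g : GL (Fin n) F) :
      Matrix (Fin n) (Fin n) F) (p.map φ) = 0 := by
    have h4 := congrArg φ.mapMatrix h2
    rw [map_zero, aeval_def, hom_eval₂] at h4
    rw [aeval_def, eval₂_map]
    have h6 : (algebraMap F (Matrix (Fin n) (Fin n) F)).comp φ =
        φ.mapMatrix.comp (algebraMap R (Matrix (Fin n) (Fin n) R)) := by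
      ext x i j
      simp [Matrix.algebraMap_matrix_apply, apply_ite φ]
    rw [h6]
    exact h4
  have h5 := Polynomial.aeval_algHom_apply (Matrix.toLinAlgEquiv' (R := F) (n := Fin n)).toAlgHom
    ((Matrix.GeneralLinearGroup.map φ g : GL (Fin n) F) : Matrix (Fin n) (Fin n) F) (p.map φ)
  rw [h3, map_zero] at h5
  exact h5

theorem prod_coset {G : Type*} [Group G] (P : Subgroup G) [P.Normal] (N : ℕ) (hN : 0 < N)
    (hP : ∀ g : G, g ^ N ∈ P) (r : ℕ) (γ : Fin r → G)
    (hb : ∀ x : G, ∃ k : Fin r → ℤ, x = (List.ofFn fun i => γ i ^ k i).prod) : P.FiniteIndex := by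
  have : Finite (G ⧸ P) := by
    have hs : Function.Surjective (fun k : Fin r → Fin N =>
        (QuotientGroup.mk' P) (List.ofFn fun i => γ i ^ (k i : ℕ)).prod) := by
      intro y
      obtain ⟨x, rfl⟩ := QuotientGroup.mk'_surjective P y
      obtain ⟨k, rfl⟩ := hb x
      refine ⟨fun i => ⟨(k i % N).toNat, ?_⟩, ?_⟩
      · have := Int.emod_lt_of_pos (k i) (by exact_mod_cast hN : (0 : ℤ) < N)
        have := Int.emod_nonneg (k i) (by exact_mod_cast hN.ne' : (N : ℤ) ≠ 0)
        omega
      · simp only [map_list_prod, List.map_ofFn]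
        congr 2
        funext i
        have h0 := Int.emod_nonneg (k i) (by exact_mod_cast hN.ne' : (N : ℤ) ≠ 0)
        simp only [Function.comp]
        rw [map_pow, map_zpow, ← zpow_natCast, Int.toNat_of_nonneg h0]
        have h1 : (QuotientGroup.mk' P (γ i)) ^ (N : ℤ) = 1 := by
          rw [zpow_natCast, ← map_pow]
          exact (QuotientGroup.eq_one_iff _).2 (hP _)
        conv_rhs => rw [← Int.emod_add_mul_ediv (k i) N, _root_.zpow_add, _root_.zpow_mul, h1, _root_.one_zpow, mul_one]
    exact Finite.of_surjective _ hs
  exact Subgroup.finiteIndex_of_finite_quotient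

theorem core (Qb : Type) [Field Qb] [CharZero Qb] [IsAlgClosed Qb] [Algebra ℚ Qb]
    [Algebra.IsAlgebraic ℚ Qb] (n : ℕ)
    (H : ∀ (F : Type) [Field F] [NumberField F] (Δ : Subgroup (GL (Fin n) F))
      (r : ℕ) (δ : Fin r → GL (Fin n) F), (∀ i, δ i ∈ Δ) →
      (∀ x ∈ Δ, ∃ k : Fin r → ℤ, x = (List.ofFn fun i => δ i ^ k i).prod) →
      (∀ i j : Fin r, ¬ IsSemisimpleElt (δ i) → ¬ IsSemisimpleElt (δ j) → i = j) →
      IsVirtuallySolvable ↥Δ)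
    (R : Type*) [CommRing R] [IsDomain R] [Algebra ℚ R] [Algebra.FiniteType ℚ R]
    (Γ : Subgroup (GL (Fin n) R))
    (r : ℕ) (γ : Fin r → GL (Fin n) R) (hmem : ∀ i, γ i ∈ Γ)
    (hb : ∀ x ∈ Γ, ∃ k : Fin r → ℤ, x = (List.ofFn fun i => γ i ^ k i).prod)
    (hs : ∀ i j : Fin r, ¬ SepData (γ i) → ¬ SepData (γ j) → i = j) :
    IsVirtuallySolvable ↥Γ := by
  obtain ⟨D, hD⟩ := specialize Qb R
  set N := (2 * ((D * n) * (D * n))).factorial with hN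
  have hNpos : 0 < N := Nat.factorial_pos _
  let X : Set Γ := Set.range fun g : Γ => g ^ N
  let P : Subgroup Γ := Subgroup.closure X
  have hPn : P.Normal := by
    refine ⟨fun p hp g => ?_⟩
    induction hp using Subgroup.closure_induction with
    | mem x hx =>
      obtain ⟨y, rfl⟩ := hx
      refine Subgroup.subset_closure ⟨g * y * g⁻¹, ?_⟩
      simp only [conj_pow]
    | one => simp
    | mul x y _ _ hx hy =>
      have := P.mul_mem hx hy
      simpa [mul_assoc] using this
    | inv x _ hx =>
      have := P.inv_mem hx
      simpa [mul_assoc] using this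
  refine ⟨P, ?_, ?_⟩
  · refine prod_coset P N hNpos (fun g => Subgroup.subset_closure ⟨g, rfl⟩) r
      (fun i => ⟨γ i, hmem i⟩) ?_
    rintro ⟨x, hx⟩
    obtain ⟨k, hk⟩ := hb x hx
    refine ⟨k, Γ.subtype_injective ?_⟩
    rw [map_list_prod, List.map_ofFn]
    exact hk
  · refine ⟨⟨n, ?_⟩⟩
    rw [eq_bot_iff]
    intro g hg
    rw [Subgroup.mem_bot]
    by_contra hg1
    obtain ⟨i, j, hij⟩ : ∃ i j, ((g : Γ) : GL (Fin n) R) i j - (1 : GL (Fin n) R) i j ≠ 0 := by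
      by_contra hcon
      push Not at hcon
      apply hg1
      apply Subtype.ext
      apply Subtype.ext
      ext i j
      exact sub_eq_zero.1 (hcon i j)
    obtain ⟨F, hFd, φ, hFD, hφ⟩ := hD _ hij
    have hnf : NumberField F := 
      { to_charZero := inferInstance
        to_finiteDimensional := by
          convert hFd
          exact Subsingleton.elim _ _ }
    let Φ := Matrix.GeneralLinearGroup.map (n := Fin n) φ
    let Δ := Γ.map Φ
    have hvs : IsVirtuallySolvable Δ := by
      refine H F Δ r (fun i => Φ (γ i)) (fun i => Subgroup.mem_map_of_mem _ (hmem i)) ?_ ?_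
      · rintro _ ⟨x, hx, rfl⟩
        obtain ⟨k, hk⟩ := hb x hx
        refine ⟨k, ?_⟩
        rw [hk, map_list_prod, List.map_ofFn]
        simp only [Function.comp_def, map_zpow]
      · intro i j hi hj
        exact hs i j (fun h => hi (ss_of_sepData φ _ h)) (fun h => hj (ss_of_sepData φ _ h))
    obtain ⟨U, l, hUn, hUc, hUl, hU0⟩ := vs_chain hvs
    let f : P →* Δ := (Φ.subgroupMap Γ).comp P.subtype
    let ρ : Representation Qb P (Fin n → Qb) :=
      (stdRep n F).comp (Δ.subtype.comp f)
    have hX' : Subgroup.closure (((↑) : P → Γ) ⁻¹' X) = ⊤ := Subgroup.closure_closure_coe_preimage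
    have key := solv_bound (L := Qb) _ hX' (fun j => (U j).comap f)
      (fun j => (hUn j).comap f)
      (fun j => by
        rw [Subgroup.commutator_le]
        intro a ha b hb
        rw [Subgroup.mem_comap] at ha hb ⊢
        rw [map_commutatorElement]
        exact hUc j (Subgroup.commutator_mem_commutator ha hb))
      l (fun g => by
        obtain ⟨k, hk, hk'⟩ := hU0 (f g)
        exact ⟨k, hk, by rw [Subgroup.mem_comap, map_pow]; exact hk'⟩) n
      (Fin n → Qb) ρ (by simp)
      (by
        rintro ⟨x, hx⟩ ⟨y, hy⟩
        have : ρ ⟨x, hx⟩ = stdRep n F ((Φ y) ^ N) := by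
          simp only at hy
          subst hy
          rw [← map_pow]
          rfl
        rw [this]
        exact neat_pow n F D hFD _)
      (by
        intro g hg
        have : f g = 1 := by
          rw [hUl] at hg
          simpa using hg
        simp [ρ, this])
      g hg
    have h1 : Φ ((g : Γ) : GL (Fin n) R) = 1 := stdRep_inj n F _ key
    apply hφ
    have h2 := congrArg (fun M : GL (Fin n) F => M i j) h1
    have h3 := congrArg (fun M : GL (Fin n) F => M i j) (map_one Φ)
    rw [map_sub, sub_eq_zero]
    exact h2.trans h3.symm
end

section
open Polynomial Module
theorem qbar_exists : ∃ (Qb : Type) (_ : Field Qb) (_ : CharZero Qb) (_ : IsAlgClosed Qb) (_ : Algebra ℚ Qb), Algebra.IsAlgebraic ℚ Qb := by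
  refine ⟨AlgebraicClosure ℚ, inferInstance, inferInstance, inferInstance, AlgebraicClosure.instAlgebra _, ?_⟩
  exact AlgebraicClosure.isAlgebraic ℚ

theorem exists_sep {n : ℕ} {K : Type*} [Field K] [CharZero K] (g : GL (Fin n) K)
    (h : IsSemisimpleElt g) : SepData g := by
  have hsq := Module.End.IsSemisimple.minpoly_squarefree h
  obtain ⟨u, v, huv⟩ := (PerfectField.separable_iff_squarefree.2 hsq)
  refine ⟨_, u, v, huv, ?_⟩
  have h5 := Polynomial.aeval_algHom_apply (Matrix.toLinAlgEquiv' (R := K) (n := Fin n)).toAlgHom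
    (g : Matrix (Fin n) (Fin n) K) (minpoly K (g : Matrix (Fin n) (Fin n) K).mulVecLin)
  have h6 : aeval (g : Matrix (Fin n) (Fin n) K).mulVecLin
    (minpoly K (g : Matrix (Fin n) (Fin n) K).mulVecLin) = 0 := minpoly.aeval _ _
  apply (Matrix.toLinAlgEquiv' (R := K) (n := Fin n)).injective
  rw [map_zero, ← h6]
  exact h5.symm

/-- descend separability data to a subring containing the coefficients -/
theorem sep_descend {n : ℕ} {R K : Type*} [CommRing R] [Field K] (φ : R →+* K)
    (hφ : Function.Injective φ) (g : GL (Fin n) R) (p u v : K[X])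
    (h1 : u * p + v * derivative p = 1)
    (h2 : aeval ((Matrix.GeneralLinearGroup.map φ g : GL (Fin n) K) :
      Matrix (Fin n) (Fin n) K) p = 0)
    (hp : ∀ i, p.coeff i ∈ φ.range) (hu : ∀ i, u.coeff i ∈ φ.range)
    (hv : ∀ i, v.coeff i ∈ φ.range) : SepData g := by
  obtain ⟨p, rfl⟩ := (Polynomial.lifts_iff_coeff_lifts p).2 hp
  obtain ⟨u, rfl⟩ := (Polynomial.lifts_iff_coeff_lifts u).2 hu
  obtain ⟨v, rfl⟩ := (Polynomial.lifts_iff_coeff_lifts v).2 hv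
  simp only [coe_mapRingHom] at h1 h2
  refine ⟨p, u, v, Polynomial.map_injective φ hφ ?_, ?_⟩
  · rw [Polynomial.map_add, Polynomial.map_mul, Polynomial.map_mul, ← derivative_map, h1,
      Polynomial.map_one]
  · have hM : Function.Injective (φ.mapMatrix (m := Fin n)) := by
      intro a b hab
      ext i j
      exact hφ (congrFun (congrFun hab i) j)
    apply hM
    rw [map_zero, aeval_def, hom_eval₂]
    rw [aeval_def, eval₂_map] at h2
    have h6 : (algebraMap K (Matrix (Fin n) (Fin n) K)).comp φ =
        φ.mapMatrix.comp (algebraMap R (Matrix (Fin n) (Fin n) R)) := by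
      ext x i j
      simp [Matrix.algebraMap_matrix_apply, apply_ite φ]
    rw [← h6]
    exact h2

theorem lift_gl {n : ℕ} {R K : Type*} [CommRing R] [Field K] (φ : R →+* K)
    (hφ : Function.Injective φ) (g : GL (Fin n) K)
    (h1 : ∀ i j, (g : Matrix (Fin n) (Fin n) K) i j ∈ φ.range)
    (h2 : ∀ i j, ((g⁻¹ : GL (Fin n) K) : Matrix (Fin n) (Fin n) K) i j ∈ φ.range) :
    ∃ g' : GL (Fin n) R, Matrix.GeneralLinearGroup.map φ g' = g := by
  choose a ha using h1
  choose b hb using h2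
  have hM : Function.Injective (φ.mapMatrix (m := Fin n)) := by
    intro a b hab
    ext i j
    exact hφ (congrFun (congrFun hab i) j)
  have haM : φ.mapMatrix (Matrix.of a) = (g : Matrix (Fin n) (Fin n) K) := by
    ext i j; exact ha i j
  have hbM : φ.mapMatrix (Matrix.of b) = ((g⁻¹ : GL (Fin n) K) : Matrix (Fin n) (Fin n) K) := by
    ext i j; exact hb i j
  refine ⟨⟨Matrix.of a, Matrix.of b, hM ?_, hM ?_⟩, ?_⟩
  · rw [map_mul, haM, hbM, map_one, ← Units.val_mul, mul_inv_cancel, Units.val_one]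
  · rw [map_mul, haM, hbM, map_one, ← Units.val_mul, inv_mul_cancel, Units.val_one]
  · ext i j; exact ha i j

theorem vs_surj {G G' : Type*} [Group G] [Group G'] (f : G →* G') (hf : Function.Surjective f)
    (h : IsVirtuallySolvable G) : IsVirtuallySolvable G' := by
  obtain ⟨T, hT, hs⟩ := h
  have hs' : Group.IsSolvable T := hs
  refine ⟨T.map f, ⟨?_⟩, ?_⟩
  · have := Subgroup.index_map_dvd T hf
    exact fun h0 => hT.index_ne_zero (Nat.eq_zero_of_zero_dvd (h0 ▸ this))
  · exact Group.isSolvable_of_surjective (f.subgroupMap_surjective T)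

theorem final (n : ℕ)
    (H : ∀ (F : Type) [Field F] [NumberField F] (Δ : Subgroup (GL (Fin n) F))
      (r : ℕ) (δ : Fin r → GL (Fin n) F), (∀ i, δ i ∈ Δ) →
      (∀ x ∈ Δ, ∃ k : Fin r → ℤ, x = (List.ofFn fun i => δ i ^ k i).prod) →
      (∀ i j : Fin r, ¬ IsSemisimpleElt (δ i) → ¬ IsSemisimpleElt (δ j) → i = j) →
      IsVirtuallySolvable ↥Δ)
    (K : Type*) [Field K] [CharZero K] (Γ : Subgroup (GL (Fin n) K))
      (r : ℕ) (γ : Fin r → GL (Fin n) K) (hmem : ∀ i, γ i ∈ Γ)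
      (hb : ∀ x ∈ Γ, ∃ k : Fin r → ℤ, x = (List.ofFn fun i => γ i ^ k i).prod)
      (hs : ∀ i j : Fin r, ¬ IsSemisimpleElt (γ i) → ¬ IsSemisimpleElt (γ j) → i = j) :
      IsVirtuallySolvable ↥Γ := by
  have hpoly : ∀ i, ∃ p u v : K[X], IsSemisimpleElt (γ i) → u * p + v * derivative p = 1 ∧
      aeval (γ i : Matrix (Fin n) (Fin n) K) p = 0 := by
    intro i
    by_cases h : IsSemisimpleElt (γ i)
    · obtain ⟨p, u, v, h⟩ := exists_sep _ h
      exact ⟨p, u, v, fun _ => h⟩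
    · exact ⟨0, 0, 0, fun h' => absurd h' h⟩
  choose p u v hpuv using hpoly
  let S : Set K := (⋃ i, ((p i).coeffs : Set K)) ∪ (⋃ i, ((u i).coeffs : Set K)) ∪
    (⋃ i, ((v i).coeffs : Set K)) ∪
    (Set.range fun t : Fin r × Fin n × Fin n => (γ t.1 : Matrix (Fin n) (Fin n) K) t.2.1 t.2.2) ∪
    (Set.range fun t : Fin r × Fin n × Fin n =>
      (((γ t.1)⁻¹ : GL (Fin n) K) : Matrix (Fin n) (Fin n) K) t.2.1 t.2.2)
  have hS : S.Finite := by
    refine ((((Set.finite_iUnion fun i => Finset.finite_toSet _).union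
      (Set.finite_iUnion fun i => Finset.finite_toSet _)).union
      (Set.finite_iUnion fun i => Finset.finite_toSet _)).union (Set.finite_range _)).union
      (Set.finite_range _)
  let R : Subalgebra ℚ K := Algebra.adjoin ℚ S
  have hSR : S ⊆ R := Algebra.subset_adjoin
  have hft : Algebra.FiniteType ℚ R :=
    (Subalgebra.fg_iff_finiteType R).1 (Subalgebra.fg_def.2 ⟨S, hS, rfl⟩)
  let φ : R →+* K := algebraMap R K
  have hφ : Function.Injective φ := Subtype.val_injective
  have hr : ∀ x ∈ R, x ∈ φ.range := fun x hx => ⟨⟨x, hx⟩, rfl⟩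
  have hc : ∀ q : K[X], (q.coeffs : Set K) ⊆ R → ∀ i, q.coeff i ∈ φ.range := by
    intro q hq i
    apply hr
    by_cases h0 : q.coeff i = 0
    · rw [h0]; exact R.zero_mem
    · exact hq (Polynomial.coeff_mem_coeffs h0)
  have hl : ∀ i, ∃ g' : GL (Fin n) R, Matrix.GeneralLinearGroup.map φ g' = γ i := by
    intro i
    refine lift_gl φ hφ _ (fun a b => hr _ (hSR ?_)) (fun a b => hr _ (hSR ?_))
    · exact Or.inl (Or.inr ⟨(i, a, b), rfl⟩)
    · exact Or.inr ⟨(i, a, b), rfl⟩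
  choose g hg using hl
  let ι : GL (Fin n) R →* GL (Fin n) K := Matrix.GeneralLinearGroup.map φ
  have hι : Function.Injective ι := by
    intro a b hab
    ext i j
    exact congrArg (fun M : GL (Fin n) K => M i j) hab
  have hsep : ∀ i, IsSemisimpleElt (γ i) → SepData (g i) := by
    intro i hi
    obtain ⟨h1, h2⟩ := hpuv i hi
    refine sep_descend φ hφ (g i) (p i) (u i) (v i) h1 (by rw [hg]; exact h2)
      (hc _ (fun x hx => hSR ?_)) (hc _ (fun x hx => hSR ?_)) (hc _ (fun x hx => hSR ?_))
    · exact Or.inl (Or.inl (Or.inl (Or.inl (Set.mem_iUnion.2 ⟨i, hx⟩))))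
    · exact Or.inl (Or.inl (Or.inl (Or.inr (Set.mem_iUnion.2 ⟨i, hx⟩))))
    · exact Or.inl (Or.inl (Or.inr (Set.mem_iUnion.2 ⟨i, hx⟩)))
  have hprod : ∀ k : Fin r → ℤ, ι (List.ofFn fun i => g i ^ k i).prod =
      (List.ofFn fun i => γ i ^ k i).prod := by
    intro k
    rw [map_list_prod, List.map_ofFn]
    simp only [Function.comp_def, map_zpow]
    simp only [ι, hg]
  obtain ⟨Qb, i1, i2, i3, i4, i5⟩ := qbar_exists
  have hcore := core Qb n H R (Γ.comap ι) r g
    (fun i => by rw [Subgroup.mem_comap]; simp only [ι, hg]; exact hmem i)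
    (fun x hx => by
      obtain ⟨k, hk⟩ := hb _ hx
      exact ⟨k, hι (hk.trans (hprod k).symm)⟩)
    (fun i j hi hj => hs i j (fun h => hi (hsep i h)) (fun h => hj (hsep j h)))
  refine vs_surj (ι.subgroupComap Γ) ?_ hcore
  rintro ⟨x, hx⟩
  obtain ⟨k, hk⟩ := hb x hx
  refine ⟨⟨(List.ofFn fun i => g i ^ k i).prod, ?_⟩, ?_⟩
  · rw [Subgroup.mem_comap, hprod, ← hk]; exact hx
  · apply Subtype.ext
    exact (hprod k).trans hk.symm
end

/-- Reduction to number fields: if every subgroup of `GL_n(F)`, `F` a number field, that is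
boundedly generated by elements at most one of which is not semi-simple is virtually solvable,
then the same holds for subgroups of `GL_n(K)` over any field `K` of characteristic zero. -/
theorem stmt_6 (n : ℕ) (hn : 1 ≤ n)
    (H : ∀ (F : Type) [Field F] [NumberField F] (Δ : Subgroup (GL (Fin n) F))
      (r : ℕ) (δ : Fin r → GL (Fin n) F), (∀ i, δ i ∈ Δ) →
      (∀ x ∈ Δ, ∃ k : Fin r → ℤ, x = (List.ofFn fun i => δ i ^ k i).prod) →
      (∀ i j : Fin r, ¬ IsSemisimpleElt (δ i) → ¬ IsSemisimpleElt (δ j) → i = j) →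
      IsVirtuallySolvable ↥Δ) :
    ∀ (K : Type u) [Field K] [CharZero K] (Γ : Subgroup (GL (Fin n) K))
      (r : ℕ) (γ : Fin r → GL (Fin n) K), (∀ i, γ i ∈ Γ) →
      (∀ x ∈ Γ, ∃ k : Fin r → ℤ, x = (List.ofFn fun i => γ i ^ k i).prod) →
      (∀ i j : Fin r, ¬ IsSemisimpleElt (γ i) → ¬ IsSemisimpleElt (γ j) → i = j) →
      IsVirtuallySolvable ↥Γ := by
  intro K _ _ Γ r γ h1 h2 h3
  exact final n H K Γ r γ h1 h2 h3
end
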